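/- arXiv:1706.00392 — 4 statements merged into one kernel-verified Lean document; each statement's English description precedes it below -/
import Mathlib

section
/- For all sufficiently large x, the number of odd primes p ≤ x with φ(p−1) = φ(p+1) is less than x / exp((log x)^{1/3}) + 2. -/
open Filter Topology

/-!
Fix a shift `k ≠ 0` and let `φ n = φ (n + k)`. For all but few `n ≤ x`, both `n` and `n + k` have
few prime factors and no large square divisor, so they have large prime factors `p` and `q`, with
cofactors `m` and `m'`: `n = m * p` and `n + k = m' * q`.

If `p * q` is small, then since `p - 1` divides `φ (n + k)`, which is nearly the product of `r - 1`
over the primes `r ∣ n + k`, some `r` shares a large divisor `d` of `p - 1` and `r - 1`. Then `n`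
lies in a residue class modulo `p * r` with `p ≡ r ≡ 1 [MOD d]`, and there are few such `n`.

If `p * q` is large, then `m * m'` is small, and the linear equations `m * p + k = m' * q` and
`φ m * (p - 1) = φ m' * (q - 1)` determine `p` and `q`, hence `n`, from `m` and `m'`, unless
`m * φ m' = m' * φ m`. This degenerate case forces `m' = m + k` and `m`, `m + k` to have the same
prime factors. For `k = 2` only `m = 2` is possible, and divisibility by `3` shows that then
`n + 1` is a prime only for `n = 10`.
-/

open Finset UniqueFactorizationMonoid

/-! ### Sieve estimates -/

theorem cast_harmonic_eq_sum_Ioc (N : ℕ) : (harmonic N : ℝ) = ∑ n ∈ Ioc 0 N, (n : ℝ)⁻¹ := by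
  simp [harmonic_eq_sum_Icc, ← Icc_add_one_left_eq_Ioc]

theorem harmonic_mono : Monotone harmonic :=
  monotone_nat_of_le_succ fun n => by
    rw [harmonic_succ]
    exact le_add_of_nonneg_right (by positivity)

theorem one_le_harmonic {N : ℕ} (hN : N ≠ 0) : 1 ≤ harmonic N := by
  simpa using harmonic_mono (Nat.one_le_iff_ne_zero.2 hN)

theorem harmonic_nonneg (N : ℕ) : 0 ≤ harmonic N :=
  harmonic_zero ▸ harmonic_mono N.zero_le

theorem sum_Icc_inv_sq_le {D : ℕ} (hD : D ≠ 0) (N : ℕ) :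
    ∑ d ∈ Icc D N, ((d : ℝ) ^ 2)⁻¹ ≤ 2 / D := by
  obtain ⟨d, rfl⟩ := Nat.exists_eq_succ_of_ne_zero hD
  have hIcc : Icc (d + 1) N = Ioo d (N + 1) := by
    ext
    simp only [mem_Icc, mem_Ioo]
    lia
  rw [Nat.succ_eq_add_one, hIcc]
  exact_mod_cast sum_Ioo_inv_sq_le (α := ℝ) d (N + 1)

theorem sum_Ioc_sum_divisorsAntidiagonal_le {S : Type*} [CommSemiring S] [PartialOrder S]
    [IsOrderedRing S] {f g : ℕ → S} (hf : 0 ≤ f) (hg : 0 ≤ g) (N : ℕ) :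
    ∑ n ∈ Ioc 0 N, ∑ x ∈ n.divisorsAntidiagonal, f x.1 * g x.2 ≤
      (∑ n ∈ Ioc 0 N, f n) * ∑ n ∈ Ioc 0 N, g n := by
  have hterm (x : ℕ × ℕ) : 0 ≤ f x.1 * g x.2 := mul_nonneg (hf _) (hg _)
  calc ∑ n ∈ Ioc 0 N, ∑ x ∈ n.divisorsAntidiagonal, f x.1 * g x.2
      = ∑ n ∈ Ioc 0 N, ∑ x ∈ Ioc 0 N ×ˢ Ioc 0 N with x.1 * x.2 = n, f x.1 * g x.2 := by
        refine sum_congr rfl fun n hn => ?_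
        rw [mem_Ioc] at hn
        rw [Nat.divisorsAntidiagonal_eq_prod_filter_of_le hn.1.ne' hn.2]
    _ ≤ ∑ x ∈ Ioc 0 N ×ˢ Ioc 0 N, f x.1 * g x.2 :=
        sum_fiberwise_le_sum_of_sum_fiber_nonneg fun _ _ => sum_nonneg fun x _ => hterm x
    _ = _ := by rw [sum_mul_sum, sum_product]

theorem add_one_pow_card_primeFactors_le {S : Type*} [CommSemiring S] [PartialOrder S]
    [IsOrderedRing S] {a : S} (ha : 0 ≤ a) {n : ℕ} (hn : n ≠ 0) :
    (a + 1) ^ #n.primeFactors ≤ ∑ d ∈ n.divisors, a ^ #d.primeFactors := by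
  have hprod : ∀ t ∈ n.primeFactors.powerset, (∏ p ∈ t, p).primeFactors = t := fun t ht =>
    Nat.primeFactors_prod fun p hp => Nat.prime_of_mem_primeFactors (mem_powerset.1 ht hp)
  have hinj : Set.InjOn (fun t : Finset ℕ => ∏ p ∈ t, p) n.primeFactors.powerset :=
    fun t ht t' ht' h => by
      rw [← hprod t (mem_coe.1 ht), ← hprod t' (mem_coe.1 ht')]
      exact congrArg _ h
  calc (a + 1) ^ #n.primeFactors
      = ∑ t ∈ n.primeFactors.powerset, a ^ #t := by
        simp only [← sum_pow_mul_eq_add_pow, one_pow, mul_one]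
    _ = ∑ t ∈ n.primeFactors.powerset, a ^ #(∏ p ∈ t, p).primeFactors :=
        sum_congr rfl fun t ht => by rw [hprod t ht]
    _ = ∑ d ∈ n.primeFactors.powerset.image (fun t => ∏ p ∈ t, p), a ^ #d.primeFactors :=
        (sum_image (f := fun d => a ^ #d.primeFactors) hinj).symm
    _ ≤ _ := by
        refine sum_le_sum_of_subset_of_nonneg (image_subset_iff.2 fun t ht => ?_)
          fun _ _ _ => pow_nonneg ha _
        exact Nat.mem_divisors.2 ⟨(prod_dvd_prod_of_subset _ _ _ (mem_powerset.1 ht)).trans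
          (Nat.prod_primeFactors_dvd n), hn⟩

theorem sum_pow_card_primeFactors_div_le (N M : ℕ) :
    ∑ n ∈ Ioc 0 N, (M : ℝ) ^ #n.primeFactors / n ≤ (harmonic N : ℝ) ^ M := by
  induction M with
  | zero =>
    have hsingle : ∑ n ∈ Ioc 0 N, ((0 : ℕ) : ℝ) ^ #n.primeFactors / n ≤
        ∑ n ∈ Ioc 0 N, if n = 1 then 1 else 0 := by
      refine sum_le_sum fun n hn => ?_
      have hn0 : n ≠ 0 := (mem_Ioc.1 hn).1.ne'
      split_ifs with h1
      · simp [h1]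
      · simp [zero_pow, hn0, h1]
    refine hsingle.trans ?_
    rw [sum_ite_eq', pow_zero]
    split_ifs <;> simp
  | succ M ih =>
    have hconv : ∀ n ∈ Ioc 0 N, ((M + 1 : ℕ) : ℝ) ^ #n.primeFactors / n ≤
        ∑ x ∈ n.divisorsAntidiagonal, (M : ℝ) ^ #x.1.primeFactors / x.1 * (x.2 : ℝ)⁻¹ := by
      intro n hn
      calc ((M + 1 : ℕ) : ℝ) ^ #n.primeFactors / n
          ≤ (∑ d ∈ n.divisors, (M : ℝ) ^ #d.primeFactors) / n := by
            rw [Nat.cast_succ]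
            gcongr
            exact add_one_pow_card_primeFactors_le M.cast_nonneg (mem_Ioc.1 hn).1.ne'
        _ = ∑ x ∈ n.divisorsAntidiagonal, (M : ℝ) ^ #x.1.primeFactors / n := by
            rw [← Nat.sum_divisorsAntidiagonal fun d _ => (M : ℝ) ^ #d.primeFactors, sum_div]
        _ = _ := sum_congr rfl fun x hx => by
            rw [← (Nat.mem_divisorsAntidiagonal.1 hx).1, Nat.cast_mul, ← div_eq_mul_inv, div_div]
    calc ∑ n ∈ Ioc 0 N, ((M + 1 : ℕ) : ℝ) ^ #n.primeFactors / n
        ≤ (∑ n ∈ Ioc 0 N, (M : ℝ) ^ #n.primeFactors / n) * ∑ n ∈ Ioc 0 N, (n : ℝ)⁻¹ :=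
          (sum_le_sum hconv).trans <| sum_Ioc_sum_divisorsAntidiagonal_le
            (f := fun n => (M : ℝ) ^ #n.primeFactors / n) (g := fun n => (n : ℝ)⁻¹)
            (fun _ => by positivity) (fun _ => by positivity) N
      _ ≤ (harmonic N : ℝ) ^ M * harmonic N := by
          rw [cast_harmonic_eq_sum_Ioc] at ih ⊢
          gcongr
      _ = _ := (pow_succ _ _).symm

theorem card_filter_lt_card_primeFactors_le (N K : ℕ) {M : ℕ} (hM : M ≠ 0) :
    (#{n ∈ Ioc 0 N | K < #n.primeFactors} : ℝ) ≤ N * (harmonic N : ℝ) ^ M / M ^ (K + 1) := by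
  have hM1 : (1 : ℝ) ≤ M := Nat.one_le_cast.2 (Nat.one_le_iff_ne_zero.2 hM)
  -- Rankin's trick: `M ^ (ω n - (K + 1))` is at least `1` on the set that is counted.
  have hpoint : ∀ n ∈ Ioc 0 N, K < #n.primeFactors →
      (M : ℝ) ^ (K + 1) ≤ N * (M ^ #n.primeFactors / n) := by
    intro n hn hK
    obtain ⟨hn0, hnN⟩ := mem_Ioc.1 hn
    have hratio : (1 : ℝ) ≤ N / n := (one_le_div₀ (by positivity)).2 (by exact_mod_cast hnN)
    calc (M : ℝ) ^ (K + 1) ≤ M ^ #n.primeFactors := pow_le_pow_right₀ hM1 hK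
      _ ≤ N / n * M ^ #n.primeFactors := le_mul_of_one_le_left (by positivity) hratio
      _ = _ := by ring
  rw [le_div_iff₀ (by positivity), ← nsmul_eq_mul]
  calc #{n ∈ Ioc 0 N | K < #n.primeFactors} • (M : ℝ) ^ (K + 1)
      ≤ ∑ n ∈ Ioc 0 N with K < #n.primeFactors, (N : ℝ) * (M ^ #n.primeFactors / n) :=
        card_nsmul_le_sum _ _ _ fun n hn => hpoint n (mem_filter.1 hn).1 (mem_filter.1 hn).2
    _ ≤ ∑ n ∈ Ioc 0 N, (N : ℝ) * (M ^ #n.primeFactors / n) :=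
        sum_le_sum_of_subset_of_nonneg (filter_subset _ _) fun _ _ _ => by positivity
    _ ≤ _ := by
        rw [← mul_sum]
        gcongr
        exact sum_pow_card_primeFactors_div_le N M

/-- `n` is divisible by the square of some `r ≥ R`. Integers without this property differ from
their radical by a factor less than `R ^ 2`. -/
def HasSqDivisorGE (R n : ℕ) : Prop := ∃ r, R ≤ r ∧ r ^ 2 ∣ n

open scoped Classical in
theorem card_filter_hasSqDivisorGE_le (N : ℕ) {R : ℕ} (hR : R ≠ 0) :
    (#{n ∈ Ioc 0 N | HasSqDivisorGE R n} : ℝ) ≤ 2 * N / R := by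
  have hsub : {n ∈ Ioc 0 N | HasSqDivisorGE R n} ⊆
      (Icc R N).biUnion fun r => {n ∈ Ioc 0 N | r ^ 2 ∣ n} := by
    intro n hn
    obtain ⟨hnN, r, hRr, hr⟩ := mem_filter.1 hn
    have hrn : r ^ 2 ≤ n := Nat.le_of_dvd (mem_Ioc.1 hnN).1 hr
    have hrN : r ≤ N := (Nat.le_self_pow two_ne_zero r).trans (hrn.trans (mem_Ioc.1 hnN).2)
    exact mem_biUnion.2 ⟨r, mem_Icc.2 ⟨hRr, hrN⟩, mem_filter.2 ⟨hnN, hr⟩⟩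
  calc (#{n ∈ Ioc 0 N | HasSqDivisorGE R n} : ℝ)
      ≤ ∑ r ∈ Icc R N, (#{n ∈ Ioc 0 N | r ^ 2 ∣ n} : ℝ) :=
        mod_cast (card_le_card hsub).trans card_biUnion_le
    _ ≤ ∑ r ∈ Icc R N, (N : ℝ) * ((r : ℝ) ^ 2)⁻¹ := by
        gcongr with r
        rw [Nat.Ioc_filter_dvd_card_eq_div, ← div_eq_mul_inv]
        exact_mod_cast Nat.cast_div_le
    _ ≤ N * (2 / R) := by
        rw [← mul_sum]
        gcongr
        exact sum_Icc_inv_sq_le hR N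
    _ = _ := by ring

theorem card_filter_dvd_and_dvd_add_le {u v : ℕ} (huv : u.Coprime v) (N k : ℕ) :
    #{n ∈ Ioc 0 N | u ∣ n ∧ v ∣ n + k} ≤ N / (u * v) + 1 := by
  rw [← card_range (N / (u * v) + 1)]
  refine card_le_card_of_injOn (· / (u * v)) (fun n hn => ?_) fun n hn n' hn' hdiv => ?_
  · exact mem_coe.2 <| mem_range_succ_iff.2 <| Nat.div_le_div_right
      (mem_Ioc.1 (mem_filter.1 (mem_coe.1 hn)).1).2
  · obtain ⟨-, hu, hv⟩ := mem_filter.1 (mem_coe.1 hn)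
    obtain ⟨-, hu', hv'⟩ := mem_filter.1 (mem_coe.1 hn')
    have hmod : n ≡ n' [MOD u * v] := by
      rw [← Nat.modEq_and_modEq_iff_modEq_mul huv]
      exact ⟨(Nat.modEq_zero_iff_dvd.2 hu).trans (Nat.modEq_zero_iff_dvd.2 hu').symm,
        Nat.ModEq.add_right_cancel' k <|
          (Nat.modEq_zero_iff_dvd.2 hv).trans (Nat.modEq_zero_iff_dvd.2 hv').symm⟩
    rw [← Nat.div_add_mod n (u * v), ← Nat.div_add_mod n' (u * v), hmod]
    exact congrArg (u * v * · + _) hdiv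

/-- `n` and `n + k` have distinct prime factors `p` and `q` of small product `p * q ≤ X` that are
linked by a large common divisor, at least `D`, of `p - 1` and `q - 1`. -/
def IsLinked (k D X n : ℕ) : Prop :=
  ∃ p q : ℕ, p.Prime ∧ q.Prime ∧ p ≠ q ∧ p ∣ n ∧ q ∣ n + k ∧ D ≤ (p - 1).gcd (q - 1) ∧ p * q ≤ X

theorem IsLinked.exists_mul_add_one {k D X n : ℕ} (hD : D ≠ 0) (h : IsLinked k D X n) :
    ∃ d ∈ Icc D X, ∃ a ∈ Ioc 0 X, ∃ b ∈ Ioc 0 X, (d * a + 1).Coprime (d * b + 1) ∧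
      (d * a + 1) * (d * b + 1) ≤ X ∧ d * a + 1 ∣ n ∧ d * b + 1 ∣ n + k := by
  obtain ⟨p, q, hp, hq, hpq, hpn, hqn, hgcd, hX⟩ := h
  set d := (p - 1).gcd (q - 1)
  obtain ⟨a, ha⟩ : d ∣ p - 1 := Nat.gcd_dvd_left _ _
  obtain ⟨b, hb⟩ : d ∣ q - 1 := Nat.gcd_dvd_right _ _
  have hd : 0 < d := by lia
  have hp2 := hp.two_le
  have hq2 := hq.two_le
  have hp' : d * a + 1 = p := by lia
  have hq' : d * b + 1 = q := by lia
  have ha0 : 0 < a := Nat.pos_of_ne_zero (by rintro rfl; lia)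
  have hb0 : 0 < b := Nat.pos_of_ne_zero (by rintro rfl; lia)
  have hpX : p ≤ X := (Nat.le_mul_of_pos_right _ hq.pos).trans hX
  have hqX : q ≤ X := (Nat.le_mul_of_pos_left _ hp.pos).trans hX
  have hda : d ≤ d * a := Nat.le_mul_of_pos_right _ ha0
  have haa : a ≤ d * a := Nat.le_mul_of_pos_left _ hd
  have hbb : b ≤ d * b := Nat.le_mul_of_pos_left _ hd
  refine ⟨d, mem_Icc.2 ⟨hgcd, by lia⟩, a, mem_Ioc.2 ⟨ha0, by lia⟩, b, mem_Ioc.2 ⟨hb0, by lia⟩, ?_⟩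
  rw [hp', hq']
  exact ⟨(Nat.coprime_primes hp hq).2 hpq, hX, hpn, hqn⟩

theorem card_filter_mul_add_one_dvd_le {d a b N X k : ℕ} (hd : 0 < d) (ha : 0 < a) (hb : 0 < b)
    (hNX : N ≤ X) (hcop : (d * a + 1).Coprime (d * b + 1))
    (hX : (d * a + 1) * (d * b + 1) ≤ X) :
    (#{n ∈ Ioc 0 N | d * a + 1 ∣ n ∧ d * b + 1 ∣ n + k} : ℝ) ≤
      2 * X * (((d : ℝ) ^ 2)⁻¹ * ((a : ℝ)⁻¹ * (b : ℝ)⁻¹)) := by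
  set m := (d * a + 1) * (d * b + 1) with hm
  have hm0 : (0 : ℝ) < m := by positivity
  have hdab : (d : ℝ) ^ 2 * (a * b) ≤ m := by
    rw [hm]
    push_cast
    nlinarith [mul_nonneg (d.cast_nonneg (α := ℝ)) (a.cast_nonneg (α := ℝ)),
      mul_nonneg (d.cast_nonneg (α := ℝ)) (b.cast_nonneg (α := ℝ))]
  calc (#{n ∈ Ioc 0 N | d * a + 1 ∣ n ∧ d * b + 1 ∣ n + k} : ℝ)
      ≤ ((N / m : ℕ) : ℝ) + 1 := mod_cast card_filter_dvd_and_dvd_add_le hcop N k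
    _ ≤ X / m + X / m := by
        have hone : (1 : ℝ) ≤ X / m := (one_le_div₀ hm0).2 (by exact_mod_cast hX)
        have hdiv : ((N / m : ℕ) : ℝ) ≤ N / m := Nat.cast_div_le
        grw [hdiv, hone, hNX]
    _ = 2 * X / m := by ring
    _ ≤ 2 * X / (d ^ 2 * (a * b)) := by gcongr
    _ = _ := by rw [div_eq_mul_inv, mul_inv, mul_inv]

open scoped Classical in
theorem card_filter_isLinked_le {D N X : ℕ} (hD : D ≠ 0) (hNX : N ≤ X) (k : ℕ) :
    (#{n ∈ Ioc 0 N | IsLinked k D X n} : ℝ) ≤ 4 * X / D * (harmonic X : ℝ) ^ 2 := by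
  set T := {t ∈ Icc D X ×ˢ Ioc 0 X ×ˢ Ioc 0 X | (t.1 * t.2.1 + 1).Coprime (t.1 * t.2.2 + 1) ∧
    (t.1 * t.2.1 + 1) * (t.1 * t.2.2 + 1) ≤ X} with hT
  have hsub : {n ∈ Ioc 0 N | IsLinked k D X n} ⊆ T.biUnion fun t =>
      {n ∈ Ioc 0 N | t.1 * t.2.1 + 1 ∣ n ∧ t.1 * t.2.2 + 1 ∣ n + k} := by
    intro n hn
    obtain ⟨hnN, hlink⟩ := mem_filter.1 hn
    obtain ⟨d, hd, a, ha, b, hb, hcop, hX, hdvd⟩ := hlink.exists_mul_add_one hD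
    exact mem_biUnion.2 ⟨(d, a, b), mem_filter.2 ⟨mem_product.2 ⟨hd, mem_product.2 ⟨ha, hb⟩⟩,
      hcop, hX⟩, mem_filter.2 ⟨hnN, hdvd⟩⟩
  calc (#{n ∈ Ioc 0 N | IsLinked k D X n} : ℝ)
      ≤ ∑ t ∈ T, (#{n ∈ Ioc 0 N | t.1 * t.2.1 + 1 ∣ n ∧ t.1 * t.2.2 + 1 ∣ n + k} : ℝ) :=
        mod_cast (card_le_card hsub).trans card_biUnion_le
    _ ≤ ∑ t ∈ T, 2 * X * (((t.1 : ℝ) ^ 2)⁻¹ * ((t.2.1 : ℝ)⁻¹ * (t.2.2 : ℝ)⁻¹)) := by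
        refine sum_le_sum fun t ht => ?_
        simp only [hT, mem_filter, mem_product, mem_Icc, mem_Ioc] at ht
        obtain ⟨⟨⟨hd, -⟩, ⟨ha, -⟩, hb, -⟩, hcop, hX⟩ := ht
        exact card_filter_mul_add_one_dvd_le (by lia) ha hb hNX hcop hX
    _ ≤ ∑ t ∈ Icc D X ×ˢ Ioc 0 X ×ˢ Ioc 0 X,
          2 * X * (((t.1 : ℝ) ^ 2)⁻¹ * ((t.2.1 : ℝ)⁻¹ * (t.2.2 : ℝ)⁻¹)) :=
        sum_le_sum_of_subset_of_nonneg (filter_subset _ _) fun _ _ _ => by positivity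
    _ = 2 * X * ((∑ d ∈ Icc D X, ((d : ℝ) ^ 2)⁻¹) * (harmonic X : ℝ) ^ 2) := by
        simp only [cast_harmonic_eq_sum_Ioc, sq (∑ n ∈ Ioc 0 X, (n : ℝ)⁻¹), sum_product,
          ← mul_sum, ← sum_mul]
    _ ≤ 2 * X * (2 / D * (harmonic X : ℝ) ^ 2) := by
        gcongr
        exact sum_Icc_inv_sq_le hD X
    _ = _ := by ring

/-! ### Large prime factors of solutions -/

theorem le_sq_mul_radical {R n : ℕ} (hn : n ≠ 0) (hsq : ¬ HasSqDivisorGE R n) :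
    n ≤ R ^ 2 * radical n := by
  obtain ⟨a, b, hab, ha⟩ := Nat.sq_mul_squarefree n
  have hbR : b < R := not_le.1 fun hRb => hsq ⟨b, hRb, hab ▸ dvd_mul_right _ _⟩
  have harad : a ∣ radical n :=
    (dvd_radical_iff ha.isRadical hn).2 (hab ▸ dvd_mul_left _ _)
  calc n = b ^ 2 * a := hab.symm
    _ ≤ R ^ 2 * radical n := by
        gcongr
        exact Nat.le_of_dvd (Nat.radical_pos n) harad

theorem exists_lt_max_primeFactor {R L K n : ℕ} (hL : L ≠ 0) (hsq : ¬ HasSqDivisorGE R n)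
    (hK : #n.primeFactors ≤ K) (hn : R ^ 2 * L ^ K < n) :
    ∃ p ∈ n.primeFactors, L < p ∧ ∀ q ∈ n.primeFactors, q ≤ p := by
  have hlarge : ∃ p ∈ n.primeFactors, L < p := by
    by_contra! hle
    have hrad : radical n ≤ L ^ K := by
      rw [Nat.radical_eq_prod_primeFactors]
      exact (prod_le_pow_card _ _ _ hle).trans (Nat.pow_le_pow_right (Nat.pos_of_ne_zero hL) hK)
    exact hn.not_ge ((le_sq_mul_radical hn.ne_bot hsq).trans (Nat.mul_le_mul_left _ hrad))
  obtain ⟨p, hp, hLp⟩ := hlarge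
  obtain ⟨r, hr, hmax⟩ := exists_max_image n.primeFactors id ⟨p, hp⟩
  exact ⟨r, hr, hLp.trans_le (hmax p hp), hmax⟩

theorem dvd_mul_prod_gcd_of_dvd_mul_prod {α ι : Type*} [CommMonoidWithZero α] [GCDMonoid α]
    {s : Finset ι} {f : ι → α} {a d : α} (h : d ∣ a * ∏ i ∈ s, f i) :
    d ∣ a * ∏ i ∈ s, gcd d (f i) := by
  induction s using Finset.cons_induction generalizing a with
  | empty => exact h
  | cons i s hi ih =>
    rw [prod_cons, ← mul_assoc] at h ⊢
    rw [mul_right_comm]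
    apply dvd_mul_gcd_of_dvd_mul
    rw [mul_right_comm]
    exact ih h

theorem exists_le_gcd_sub_one_of_dvd_totient {R D K d n : ℕ} (hn : n ≠ 0) (hD : D ≠ 0)
    (hsq : ¬ HasSqDivisorGE R n) (hK : #n.primeFactors ≤ K) (hd : R ^ 2 * D ^ K < d)
    (hdvd : d ∣ n.totient) : ∃ q ∈ n.primeFactors, D ≤ d.gcd (q - 1) := by
  by_contra! hlt
  rw [Nat.totient_eq_div_primeFactors_mul, ← Nat.radical_eq_prod_primeFactors] at hdvd
  have hdvd' := dvd_mul_prod_gcd_of_dvd_mul_prod hdvd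
  have hquot : n / radical n ≤ R ^ 2 :=
    Nat.div_le_of_le_mul ((le_sq_mul_radical hn hsq).trans_eq (mul_comm _ _))
  have hprod : ∏ q ∈ n.primeFactors, gcd d (q - 1) ≤ D ^ K :=
    (prod_le_pow_card _ _ _ fun q hq => (hlt q hq).le).trans
      (Nat.pow_le_pow_right (Nat.pos_of_ne_zero hD) hK)
  have hpos : 0 < n / radical n * ∏ q ∈ n.primeFactors, gcd d (q - 1) :=
    Nat.mul_pos (Nat.div_pos (Nat.le_of_dvd (Nat.pos_of_ne_zero hn) radical_dvd_self)
      (Nat.radical_pos n)) (prod_pos fun q _ => Nat.gcd_pos_of_pos_left _ hd.pos)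
  exact hd.not_ge ((Nat.le_of_dvd hpos hdvd').trans (Nat.mul_le_mul hquot hprod))

theorem eq_empty_of_prod_dvd_prod_mul_prod_sub_one {s t : Finset ℕ} (hs : ∀ p ∈ s, p.Prime)
    (ht : ∀ p ∈ t, p.Prime) (hst : Disjoint s t)
    (h : ∏ p ∈ s, p ∣ (∏ p ∈ t, p) * ∏ p ∈ s, (p - 1)) : s = ∅ := by
  by_contra! hne
  obtain ⟨r, hr, hmax⟩ := exists_max_image s id hne
  have hrp := hs r hr
  -- The largest prime `r` of `s` divides no `p - 1` with `p ∈ s`.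
  rcases hrp.dvd_mul.1 ((dvd_prod_of_mem _ hr).trans h) with hdvd | hdvd
  · obtain ⟨p, hp, hrp'⟩ := hrp.prime.exists_mem_finset_dvd hdvd
    obtain rfl := (Nat.prime_dvd_prime_iff_eq hrp (ht p hp)).1 hrp'
    exact disjoint_left.1 hst hr hp
  · obtain ⟨p, hp, hrp'⟩ := hrp.prime.exists_mem_finset_dvd hdvd
    have hpr : p ≤ r := hmax p hp
    have hp2 := (hs p hp).two_le
    have hrle := Nat.le_of_dvd (by lia) hrp'
    lia

theorem eq_of_prod_mul_prod_sub_one_eq {s t : Finset ℕ} (hs : ∀ p ∈ s, p.Prime)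
    (ht : ∀ p ∈ t, p.Prime)
    (h : (∏ p ∈ s, p) * ∏ p ∈ t, (p - 1) = (∏ p ∈ t, p) * ∏ p ∈ s, (p - 1)) : s = t := by
  have hcommon : (∏ p ∈ s ∩ t, p) * ∏ p ∈ s ∩ t, (p - 1) ≠ 0 := by
    refine mul_ne_zero (prod_ne_zero_iff.2 fun p hp => ?_) (prod_ne_zero_iff.2 fun p hp => ?_)
    all_goals
      have hp2 := (hs p (mem_inter.1 hp).1).two_le
      lia
  have hcancel : (∏ p ∈ s \ t, p) * ∏ p ∈ t \ s, (p - 1) =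
      (∏ p ∈ t \ s, p) * ∏ p ∈ s \ t, (p - 1) := by
    rw [← prod_inter_mul_prod_sdiff s t, ← prod_inter_mul_prod_sdiff t s,
      ← prod_inter_mul_prod_sdiff s t, ← prod_inter_mul_prod_sdiff t s, inter_comm t s] at h
    refine mul_left_cancel₀ hcommon ?_
    linear_combination h
  have hs' : ∀ p ∈ s \ t, p.Prime := fun p hp => hs p (mem_sdiff.1 hp).1
  have ht' : ∀ p ∈ t \ s, p.Prime := fun p hp => ht p (mem_sdiff.1 hp).1
  refine Subset.antisymm (sdiff_eq_empty_iff_subset.1 ?_) (sdiff_eq_empty_iff_subset.1 ?_)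
  · exact eq_empty_of_prod_dvd_prod_mul_prod_sub_one hs' ht' disjoint_sdiff_sdiff
      (hcancel ▸ dvd_mul_right _ _)
  · exact eq_empty_of_prod_dvd_prod_mul_prod_sub_one ht' hs' disjoint_sdiff_sdiff
      (hcancel ▸ dvd_mul_right _ _)

theorem primeFactors_eq_of_mul_totient_eq {m m' : ℕ} (hm : m ≠ 0) (hm' : m' ≠ 0)
    (h : m * m'.totient = m' * m.totient) : m.primeFactors = m'.primeFactors := by
  refine eq_of_prod_mul_prod_sub_one_eq (fun _ => Nat.prime_of_mem_primeFactors)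
    (fun _ => Nat.prime_of_mem_primeFactors) (mul_left_cancel₀ (mul_ne_zero hm hm') ?_)
  have hφ := Nat.totient_mul_prod_primeFactors m
  have hφ' := Nat.totient_mul_prod_primeFactors m'
  linear_combination (m * ∏ p ∈ m.primeFactors, p) * -hφ' +
    (m' * ∏ p ∈ m'.primeFactors, p) * hφ +
    ((∏ p ∈ m.primeFactors, p) * ∏ p ∈ m'.primeFactors, p) * h

/-- `p` is a prime dividing `n` exactly once, with cofactor `m`. -/
structure IsExactPrimeFactor (p m n : ℕ) : Prop where
  prime : p.Prime
  not_dvd : ¬ p ∣ m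
  eq_mul : n = m * p

namespace IsExactPrimeFactor

variable {p m n : ℕ}

theorem cofactor_ne_zero (h : IsExactPrimeFactor p m n) : m ≠ 0 := by
  rintro rfl
  exact h.not_dvd (dvd_zero p)

theorem totient_eq (h : IsExactPrimeFactor p m n) : n.totient = m.totient * (p - 1) := by
  rw [h.eq_mul, Nat.totient_mul ((h.prime.coprime_iff_not_dvd.2 h.not_dvd).symm),
    Nat.totient_prime h.prime]

end IsExactPrimeFactor

theorem exists_isExactPrimeFactor {R p n : ℕ} (hp : p ∈ n.primeFactors) (hRp : R ≤ p)
    (hsq : ¬ HasSqDivisorGE R n) : ∃ m, IsExactPrimeFactor p m n := by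
  obtain ⟨m, rfl⟩ := Nat.dvd_of_mem_primeFactors hp
  refine ⟨m, Nat.prime_of_mem_primeFactors hp, fun hpm => hsq ⟨p, hRp, ?_⟩, mul_comm _ _⟩
  exact sq p ▸ Nat.mul_dvd_mul_left p hpm

/-- The parametric family of pairs `(n, n + k)` that may satisfy `φ n = φ (n + k)` far more often
than the others: up to the factors `p` and `q`, which occur once, `n` and `n + k` are integers `j`
and `j + k` with the same prime factors. -/
def IsExceptional (k n : ℕ) : Prop :=
  ∃ j p q : ℕ, j.primeFactors = (j + k).primeFactors ∧
    IsExactPrimeFactor p j n ∧ IsExactPrimeFactor q (j + k) (n + k)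

/-- `n` and `n + k` have exact prime factors whose cofactors have product at most `Z`. -/
def HasSmallCofactors (k Z n : ℕ) : Prop :=
  ∃ m m' p q : ℕ, IsExactPrimeFactor p m n ∧ IsExactPrimeFactor q m' (n + k) ∧ m * m' ≤ Z

section Cofactors

variable {k m m' n p q : ℕ}

theorem isExceptional_of_mul_totient_eq (hp : IsExactPrimeFactor p m n)
    (hq : IsExactPrimeFactor q m' (n + k)) (hφ : n.totient = (n + k).totient)
    (h : m * m'.totient = m' * m.totient) : IsExceptional k n := by
  have hφm : m.totient ≠ 0 := (Nat.totient_pos.2 (Nat.pos_of_ne_zero hp.cofactor_ne_zero)).ne'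
  have hsub : m * (p - 1) = m' * (q - 1) := by
    refine mul_left_cancel₀ hφm ?_
    rw [hp.totient_eq, hq.totient_eq] at hφ
    linear_combination m * hφ + (q - 1) * h
  have hm' : m' = m + k := by
    obtain ⟨p, rfl⟩ := Nat.exists_eq_succ_of_ne_zero hp.prime.ne_zero
    obtain ⟨q, rfl⟩ := Nat.exists_eq_succ_of_ne_zero hq.prime.ne_zero
    have hn := hp.eq_mul
    have hnk := hq.eq_mul
    simp only [Nat.succ_eq_add_one, Nat.add_sub_cancel, mul_add, mul_one] at hsub hn hnk
    lia
  subst hm'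
  exact ⟨m, p, q, primeFactors_eq_of_mul_totient_eq hp.cofactor_ne_zero hq.cofactor_ne_zero h,
    hp, hq⟩

theorem mul_totient_eq_of_two_solutions {n₁ n₂ p₁ p₂ q₁ q₂ : ℕ} (hne : n₁ ≠ n₂)
    (hp₁ : IsExactPrimeFactor p₁ m n₁) (hq₁ : IsExactPrimeFactor q₁ m' (n₁ + k))
    (hp₂ : IsExactPrimeFactor p₂ m n₂) (hq₂ : IsExactPrimeFactor q₂ m' (n₂ + k))
    (hφ₁ : n₁.totient = (n₁ + k).totient) (hφ₂ : n₂.totient = (n₂ + k).totient) :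
    m * m'.totient = m' * m.totient := by
  rw [hp₁.totient_eq, hq₁.totient_eq] at hφ₁
  rw [hp₂.totient_eq, hq₂.totient_eq] at hφ₂
  have hn₁ : m * p₁ + k = m' * q₁ := hp₁.eq_mul ▸ hq₁.eq_mul
  have hn₂ : m * p₂ + k = m' * q₂ := hp₂.eq_mul ▸ hq₂.eq_mul
  have hp : (p₁ - p₂ : ℤ) ≠ 0 := fun h => hne <| by
    rw [hp₁.eq_mul, hp₂.eq_mul, Nat.cast_injective (sub_eq_zero.1 h)]
  zify [hp₁.prime.one_le, hp₂.prime.one_le, hq₁.prime.one_le, hq₂.prime.one_le]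
    at hφ₁ hφ₂ hn₁ hn₂ ⊢
  -- Subtracting, `(p₁ - p₂, q₁ - q₂)` is a nonzero solution of a homogeneous linear system, whose
  -- determinant is the difference of the two sides.
  refine mul_right_cancel₀ hp ?_
  linear_combination (m'.totient : ℤ) * (hn₁ - hn₂) - (m' : ℤ) * (hφ₁ - hφ₂)

end Cofactors

theorem card_sigma_Ioc_div_le (Z : ℕ) :
    (#((Ioc 0 Z).sigma fun m => Ioc 0 (Z / m)) : ℝ) ≤ Z * harmonic Z := by
  simp only [card_sigma, Nat.card_Ioc, tsub_zero, Nat.cast_sum, cast_harmonic_eq_sum_Ioc, mul_sum]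
  exact sum_le_sum fun m _ => Nat.cast_div_le

open scoped Classical in
theorem card_filter_hasSmallCofactors_le (k N Z : ℕ) :
    (#{n ∈ Ioc 0 N | n.totient = (n + k).totient ∧ ¬ IsExceptional k n ∧
      HasSmallCofactors k Z n} : ℝ) ≤ Z * harmonic Z := by
  refine le_trans (Nat.cast_le.2 ?_) (card_sigma_Ioc_div_le Z)
  refine card_le_card_of_forall_subsingleton
    (fun n (t : (_ : ℕ) × ℕ) => ∃ p q, IsExactPrimeFactor p t.1 n ∧
      IsExactPrimeFactor q t.2 (n + k)) (fun n hn => ?_) fun t _ n₁ hn₁ n₂ hn₂ => ?_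
  · obtain ⟨-, -, -, m, m', p, q, hp, hq, hZ⟩ := mem_filter.1 hn
    have hm := Nat.pos_of_ne_zero hp.cofactor_ne_zero
    have hm' := Nat.pos_of_ne_zero hq.cofactor_ne_zero
    refine ⟨⟨m, m'⟩, mem_sigma.2 ⟨mem_Ioc.2 ⟨hm, ?_⟩, mem_Ioc.2 ⟨hm', ?_⟩⟩, p, q, hp, hq⟩
    · exact (Nat.le_mul_of_pos_right m hm').trans hZ
    · exact (Nat.le_div_iff_mul_le hm).2 ((mul_comm _ _).trans_le hZ)
  · obtain ⟨hmem₁, p₁, q₁, hp₁, hq₁⟩ := hn₁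
    obtain ⟨hmem₂, p₂, q₂, hp₂, hq₂⟩ := hn₂
    obtain ⟨-, hφ₁, hexc, -⟩ := mem_filter.1 hmem₁
    obtain ⟨-, hφ₂, -⟩ := mem_filter.1 hmem₂
    by_contra hne
    exact hexc (isExceptional_of_mul_totient_eq hp₁ hq₁ hφ₁
      (mul_totient_eq_of_two_solutions hne hp₁ hq₁ hp₂ hq₂ hφ₁ hφ₂))

theorem hasSmallCofactors_of_lt_mul {k m m' n p q R Y : ℕ} (hR : R ≠ 0)
    (hp : IsExactPrimeFactor p m n) (hq : IsExactPrimeFactor q m' (n + k)) (hnY : n + k ≤ Y)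
    (hpq : Y * R < p * q) : HasSmallCofactors k (Y / R) n := by
  have hn : 0 < n := hp.eq_mul ▸
    Nat.mul_pos (Nat.pos_of_ne_zero hp.cofactor_ne_zero) hp.prime.pos
  have hY : m * m' * R * Y ≤ Y * Y := calc
    m * m' * R * Y = m * m' * (Y * R) := by ring
    _ ≤ m * m' * (p * q) := Nat.mul_le_mul_left _ hpq.le
    _ = (m * p) * (m' * q) := by ring
    _ = n * (n + k) := by rw [← hp.eq_mul, ← hq.eq_mul]
    _ ≤ Y * Y := Nat.mul_le_mul (by lia) hnY
  exact ⟨m, m', p, q, hp, hq, (Nat.le_div_iff_mul_le (Nat.pos_of_ne_zero hR)).2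
    (Nat.le_of_mul_le_mul_right hY (by lia))⟩

/-- `n` has too many prime factors, or too large a square divisor; the sieve discards such `n`. -/
def IsIrregular (R K n : ℕ) : Prop := HasSqDivisorGE R n ∨ K < #n.primeFactors

theorem isLinked_or_hasSmallCofactors {k n K D L R Y : ℕ} (hk : k ≠ 0) (hkL : k ≤ L) (hRL : R ≤ L)
    (hD : D ≠ 0) (hDL : R ^ 2 * D ^ K < L) (hLY : R ^ 3 * L ^ K ≤ Y) (hnY : n + k ≤ Y)
    (hYn : Y < n * R) (hφ : n.totient = (n + k).totient) (hreg : ¬ IsIrregular R K n)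
    (hreg' : ¬ IsIrregular R K (n + k)) :
    IsLinked k D (Y * R) n ∨ HasSmallCofactors k (Y / R) n := by
  obtain ⟨hsq, hK⟩ := not_or.1 hreg
  obtain ⟨hsq', hK'⟩ := not_or.1 hreg'
  rw [not_lt] at hK hK'
  have hR : R ≠ 0 := (pos_of_mul_pos_right hYn.pos n.zero_le).ne'
  have hn : R ^ 2 * L ^ K < n := by
    refine lt_of_mul_lt_mul_right (a := R) ?_ R.zero_le
    calc R ^ 2 * L ^ K * R = R ^ 3 * L ^ K := by ring
      _ < n * R := hLY.trans_lt hYn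
  have hL : L ≠ 0 := hDL.ne_bot
  obtain ⟨p, hp, hLp, -⟩ := exists_lt_max_primeFactor hL hsq hK hn
  obtain ⟨q, hq, hLq, hqmax⟩ :=
    exists_lt_max_primeFactor hL hsq' hK' (hn.trans_le (n.le_add_right k))
  obtain ⟨m, hm⟩ := exists_isExactPrimeFactor hp (hRL.trans hLp.le) hsq
  obtain ⟨m', hm'⟩ := exists_isExactPrimeFactor hq (hRL.trans hLq.le) hsq'
  rcases le_or_gt (p * q) (Y * R) with hpq | hpq
  · left
    have hdvd : p - 1 ∣ (n + k).totient := hφ ▸ hm.totient_eq ▸ dvd_mul_left _ _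
    obtain ⟨r, hr, hDr⟩ := exists_le_gcd_sub_one_of_dvd_totient (by lia) hD hsq' hK'
      (by lia : R ^ 2 * D ^ K < p - 1) hdvd
    have hpr : p ≠ r := by
      rintro rfl
      have hpk : p ∣ k :=
        (Nat.dvd_add_right (Nat.dvd_of_mem_primeFactors hp)).1 (Nat.dvd_of_mem_primeFactors hr)
      exact (hkL.trans_lt hLp).not_ge (Nat.le_of_dvd (Nat.pos_of_ne_zero hk) hpk)
    exact ⟨p, r, hm.prime, Nat.prime_of_mem_primeFactors hr, hpr, Nat.dvd_of_mem_primeFactors hp,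
      Nat.dvd_of_mem_primeFactors hr, hDr, (Nat.mul_le_mul_left p (hqmax r hr)).trans hpq⟩
  · exact .inr (hasSmallCofactors_of_lt_mul hR hm hm' hnY hpq)

open scoped Classical in
theorem card_filter_isIrregular_le {K N R M : ℕ} (hN : N ≠ 0) (hR : R ≠ 0)
    (hRM : R ≤ M ^ (K + 1)) :
    (#{n ∈ Ioc 0 N | IsIrregular R K n} : ℝ) ≤ 3 * (N / R * (harmonic N : ℝ) ^ M) := by
  have hM : M ≠ 0 := by
    rintro rfl
    simp [hR] at hRM
  have hH : (1 : ℝ) ≤ (harmonic N : ℝ) ^ M := one_le_pow₀ (mod_cast one_le_harmonic hN)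
  have hsub : {n ∈ Ioc 0 N | IsIrregular R K n} ⊆
      {n ∈ Ioc 0 N | HasSqDivisorGE R n} ∪ {n ∈ Ioc 0 N | K < #n.primeFactors} := fun n hn => by
    obtain ⟨hnN, hirr⟩ := mem_filter.1 hn
    exact mem_union.2 (hirr.imp (mem_filter.2 ⟨hnN, ·⟩) (mem_filter.2 ⟨hnN, ·⟩))
  calc (#{n ∈ Ioc 0 N | IsIrregular R K n} : ℝ)
      ≤ #{n ∈ Ioc 0 N | HasSqDivisorGE R n} + #{n ∈ Ioc 0 N | K < #n.primeFactors} :=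
        mod_cast (card_le_card hsub).trans (card_union_le _ _)
    _ ≤ 2 * N / R + N * (harmonic N : ℝ) ^ M / M ^ (K + 1) :=
        add_le_add (card_filter_hasSqDivisorGE_le N hR)
          (card_filter_lt_card_primeFactors_le N K hM)
    _ ≤ 2 * (N / R) * (harmonic N : ℝ) ^ M + N * (harmonic N : ℝ) ^ M / R := by
        rw [mul_div_assoc]
        refine add_le_add (le_mul_of_one_le_right (by positivity) hH) ?_
        gcongr
        exact_mod_cast hRM
    _ = _ := by ring

theorem card_filter_add_right_le (P : ℕ → Prop) [DecidablePred P] (N k : ℕ) :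
    #{n ∈ Ioc 0 N | P (n + k)} ≤ #{n ∈ Ioc 0 (N + k) | P n} := by
  refine card_le_card_of_injOn (· + k) (fun n hn => ?_) (add_left_injective k).injOn
  simp only [coe_filter, mem_Ioc, Set.mem_ofPred_eq] at hn ⊢
  exact ⟨⟨by lia, by lia⟩, hn.2⟩

open scoped Classical in
theorem card_filter_totient_eq_le {k K D L R N : ℕ} (hk : k ≠ 0) (hkL : k ≤ L) (hRL : R ≤ L)
    (hR : R ≠ 0) (hD : D ≠ 0) (hDL : R ^ 2 * D ^ K < L) (hLN : R ^ 3 * L ^ K ≤ N + k) :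
    #{n ∈ Ioc 0 N | n.totient = (n + k).totient ∧ ¬ IsExceptional k n} ≤
      (N + k) / R + 2 * #{n ∈ Ioc 0 (N + k) | IsIrregular R K n} +
        #{n ∈ Ioc 0 N | IsLinked k D ((N + k) * R) n} +
        #{n ∈ Ioc 0 N | n.totient = (n + k).totient ∧ ¬ IsExceptional k n ∧
          HasSmallCofactors k ((N + k) / R) n} := by
  have hcover : {n ∈ Ioc 0 N | n.totient = (n + k).totient ∧ ¬ IsExceptional k n} ⊆
      Ioc 0 ((N + k) / R) ∪ {n ∈ Ioc 0 N | IsIrregular R K n} ∪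
        {n ∈ Ioc 0 N | IsIrregular R K (n + k)} ∪
        {n ∈ Ioc 0 N | IsLinked k D ((N + k) * R) n} ∪
        {n ∈ Ioc 0 N | n.totient = (n + k).totient ∧ ¬ IsExceptional k n ∧
          HasSmallCofactors k ((N + k) / R) n} := by
    intro n hn
    have hdich := isLinked_or_hasSmallCofactors (n := n) hk hkL hRL hD hDL hLN
    simp only [mem_union, mem_filter, mem_Ioc, Nat.le_div_iff_mul_le (Nat.pos_of_ne_zero hR)]
      at hn ⊢
    by_contra! hnot
    grind
  have hmono : #{n ∈ Ioc 0 N | IsIrregular R K n} ≤ #{n ∈ Ioc 0 (N + k) | IsIrregular R K n} :=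
    card_le_card (filter_subset_filter _ (Ioc_subset_Ioc_right (N.le_add_right k)))
  have hshift := card_filter_add_right_le (IsIrregular R K) N k
  grw [card_le_card hcover, card_union_le, card_union_le, card_union_le, card_union_le,
    hmono, hshift, Nat.card_Ioc]
  lia

open scoped Classical in
theorem card_filter_totient_eq_le_harmonic {k K M R N : ℕ} (hk : k ≠ 0) (hkR : k ≤ R) (hR : 2 ≤ R)
    (hM : 2 ≤ M) (hRM : R ≤ M ^ (K + 1)) (hRN : R ^ (3 + (2 * K + 3) * K) ≤ N + k) :
    (#{n ∈ Ioc 0 N | n.totient = (n + k).totient ∧ ¬ IsExceptional k n} : ℝ) ≤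
      12 * ((N + k : ℕ) / R * (harmonic ((N + k) * R) : ℝ) ^ M) := by
  set Y := N + k
  set H : ℝ := (harmonic (Y * R) : ℝ)
  have hY0 : Y ≠ 0 := by lia
  have hR0 : R ≠ 0 := by lia
  have hharm {m : ℕ} (hm : m ≤ Y * R) : (harmonic m : ℝ) ≤ H := Rat.cast_le.2 (harmonic_mono hm)
  -- The parameters are `D = R ^ 2` and `L = R ^ (2 * K + 3)`.
  have hRL : R ≤ R ^ (2 * K + 3) := Nat.le_self_pow (by lia) R
  have hDL : R ^ 2 * (R ^ 2) ^ K < R ^ (2 * K + 3) := by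
    rw [← pow_mul, ← pow_add]
    exact Nat.pow_lt_pow_right hR (by lia)
  have hLN : R ^ 3 * (R ^ (2 * K + 3)) ^ K ≤ Y := by rwa [← pow_mul, ← pow_add]
  have hYR : Y ≤ Y * R := Nat.le_mul_of_pos_right Y (by lia)
  have hH : 1 ≤ H := le_trans (mod_cast one_le_harmonic hY0) (hharm hYR)
  have hquot : ((Y / R : ℕ) : ℝ) ≤ Y / R * H ^ M :=
    Nat.cast_div_le.trans (le_mul_of_one_le_right (by positivity) (one_le_pow₀ hH))
  have hirr : (#{n ∈ Ioc 0 Y | IsIrregular R K n} : ℝ) ≤ 3 * (Y / R * H ^ M) := by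
    grw [card_filter_isIrregular_le hY0 hR0 hRM, hharm hYR]
    exact Rat.cast_nonneg.2 (harmonic_nonneg Y)
  have hlink : (#{n ∈ Ioc 0 N | IsLinked k (R ^ 2) (Y * R) n} : ℝ) ≤ 4 * (Y / R * H ^ M) := by
    have hcancel : 4 * ((Y * R : ℕ) : ℝ) / (R ^ 2 : ℕ) = 4 * (Y / R) := by
      push_cast
      field_simp
    grw [card_filter_isLinked_le (pow_ne_zero 2 hR0) ((N.le_add_right k).trans hYR) k, hcancel,
      mul_assoc, pow_le_pow_right₀ hH hM]
  have hsmall : (#{n ∈ Ioc 0 N | n.totient = (n + k).totient ∧ ¬ IsExceptional k n ∧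
      HasSmallCofactors k (Y / R) n} : ℝ) ≤ Y / R * H ^ M := by
    grw [card_filter_hasSmallCofactors_le k N (Y / R), hharm ((Nat.div_le_self Y R).trans hYR),
      Nat.cast_div_le]
    gcongr
    exact le_self_pow₀ hH (by lia)
  have hcard := card_filter_totient_eq_le hk (hkR.trans hRL) hRL hR0 (pow_ne_zero 2 hR0) hDL hLN
  have hcard' := (Nat.cast_le (α := ℝ)).2 hcard
  push_cast at hcard'
  linarith

/-! ### Choice of parameters -/

theorem natCast_pow_le_exp_cube {ℓ : ℝ} {R K : ℕ} (hℓ : 10 ≤ ℓ) (hR : (R : ℝ) ≤ Real.exp (3 * ℓ))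
    (hK : (K : ℝ) ≤ ℓ / 4) : (R : ℝ) ^ (3 + (2 * K + 3) * K) ≤ Real.exp (ℓ ^ 3) := by
  calc (R : ℝ) ^ (3 + (2 * K + 3) * K) ≤ Real.exp (3 * ℓ) ^ (3 + (2 * K + 3) * K) := by gcongr
    _ = Real.exp ((3 + (2 * K + 3) * K) * (3 * ℓ)) := by
        rw [← Real.exp_nat_mul]
        push_cast
        rfl
    _ ≤ Real.exp ((3 + (2 * (ℓ / 4) + 3) * (ℓ / 4)) * (3 * ℓ)) := by gcongr
    _ ≤ Real.exp (ℓ ^ 3) := by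
        gcongr
        nlinarith [mul_nonneg (sub_nonneg.2 hℓ) (sub_nonneg.2 hℓ)]

theorem ceil_exp_two_mul_le {ℓ : ℝ} (hℓ : 1 ≤ ℓ) :
    (⌈Real.exp (2 * ℓ)⌉₊ : ℝ) ≤ Real.exp (3 * ℓ) := by
  have hone : 1 ≤ Real.exp (2 * ℓ) := Real.one_le_exp (by linarith)
  have htwo : 2 ≤ Real.exp ℓ := by linarith [Real.add_one_le_exp ℓ]
  calc (⌈Real.exp (2 * ℓ)⌉₊ : ℝ) ≤ Real.exp (2 * ℓ) + 1 := (Nat.ceil_lt_add_one (by positivity)).le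
    _ ≤ Real.exp (2 * ℓ) * Real.exp ℓ := by nlinarith
    _ = _ := by
        rw [← Real.exp_add]
        ring_nf

theorem le_pow_of_natCast_le_exp {ℓ : ℝ} {R K M : ℕ} (hR : (R : ℝ) ≤ Real.exp (3 * ℓ))
    (hK : ℓ / 4 ≤ K + 1) (hM : Real.exp 12 ≤ M) : R ≤ M ^ (K + 1) := by
  have hcast : (R : ℝ) ≤ (M : ℝ) ^ (K + 1) := calc
    (R : ℝ) ≤ Real.exp ((K + 1 : ℕ) * 12) := hR.trans <| Real.exp_le_exp.2 <| by
        push_cast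
        linarith
    _ = Real.exp 12 ^ (K + 1) := Real.exp_nat_mul ..
    _ ≤ (M : ℝ) ^ (K + 1) := by gcongr
  exact_mod_cast hcast

theorem harmonic_mul_le_two_mul_cube {ℓ : ℝ} {R Y : ℕ} (hℓ : 10 ≤ ℓ)
    (hY : (Y : ℝ) ≤ 2 * Real.exp (ℓ ^ 3)) (hR : (R : ℝ) ≤ Real.exp (3 * ℓ)) :
    (harmonic (Y * R) : ℝ) ≤ 2 * ℓ ^ 3 := by
  have hle : ((Y * R : ℕ) : ℝ) ≤ Real.exp (1 + ℓ ^ 3 + 3 * ℓ) := by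
    have htwo : (2 : ℝ) ≤ Real.exp 1 := by linarith [Real.add_one_le_exp 1]
    rw [Nat.cast_mul, Real.exp_add, Real.exp_add]
    grw [hY, hR, htwo]
  rcases Nat.eq_zero_or_pos (Y * R) with h0 | hpos
  · rw [h0]
    simp only [harmonic_zero, Rat.cast_zero]
    positivity
  · have hlog := (Real.log_le_iff_le_exp (Nat.cast_pos.2 hpos)).2 hle
    nlinarith [harmonic_le_one_add_log (Y * R), mul_nonneg (sub_nonneg.2 hℓ) (sub_nonneg.2 hℓ)]

open scoped Classical in
theorem card_filter_totient_eq_lt {k M : ℕ} {ℓ : ℝ} (hk : k ≠ 0) (hℓ : 10 ≤ ℓ) (hkℓ : k ≤ ℓ)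
    (hM : Real.exp 12 ≤ M) (hexp : 24 * (2 * ℓ ^ 3) ^ M < Real.exp ℓ) :
    (#{n ∈ Ioc 0 ⌊Real.exp (ℓ ^ 3)⌋₊ | n.totient = (n + k).totient ∧ ¬ IsExceptional k n} : ℝ) <
      Real.exp (ℓ ^ 3) / Real.exp ℓ := by
  set x := Real.exp (ℓ ^ 3)
  set R := ⌈Real.exp (2 * ℓ)⌉₊
  set K := ⌊ℓ / 4⌋₊
  have hRlow : Real.exp (2 * ℓ) ≤ R := Nat.le_ceil _
  have hRup : (R : ℝ) ≤ Real.exp (3 * ℓ) := ceil_exp_two_mul_le (by linarith)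
  have hkR : (k : ℝ) ≤ R := by linarith [Real.add_one_le_exp (2 * ℓ)]
  have hR2 : (2 : ℝ) ≤ R := by linarith [Real.add_one_le_exp (2 * ℓ)]
  have hM2 : (2 : ℝ) ≤ M := by linarith [Real.add_one_le_exp 12]
  have hRM : R ≤ M ^ (K + 1) := le_pow_of_natCast_le_exp hRup (Nat.lt_floor_add_one _).le hM
  have hRx : (R : ℝ) ^ (3 + (2 * K + 3) * K) ≤ x :=
    natCast_pow_le_exp_cube hℓ hRup (Nat.floor_le (by linarith))
  have hRN : R ^ (3 + (2 * K + 3) * K) ≤ ⌊x⌋₊ := Nat.le_floor (by exact_mod_cast hRx)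
  have hY : ((⌊x⌋₊ + k : ℕ) : ℝ) ≤ 2 * x := by
    have hfloor : (⌊x⌋₊ : ℝ) ≤ x := Nat.floor_le (by positivity)
    have hℓx : ℓ ≤ x := by
      linarith [Real.add_one_le_exp (ℓ ^ 3), le_self_pow₀ (by linarith : 1 ≤ ℓ) three_ne_zero]
    push_cast
    linarith
  have hharm := harmonic_mul_le_two_mul_cube hℓ hY hRup
  have hharm0 : (0 : ℝ) ≤ harmonic ((⌊x⌋₊ + k) * R) := Rat.cast_nonneg.2 (harmonic_nonneg _)
  refine (card_filter_totient_eq_le_harmonic hk (mod_cast hkR) (mod_cast hR2) (mod_cast hM2) hRM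
    (hRN.trans (Nat.le_add_right _ k))).trans_lt ?_
  calc 12 * ((⌊x⌋₊ + k : ℕ) / (R : ℝ) * (harmonic ((⌊x⌋₊ + k) * R) : ℝ) ^ M)
      ≤ 12 * (2 * x / Real.exp (2 * ℓ) * (2 * ℓ ^ 3) ^ M) := by gcongr
    _ = x / Real.exp (2 * ℓ) * (24 * (2 * ℓ ^ 3) ^ M) := by ring
    _ < x / Real.exp (2 * ℓ) * Real.exp ℓ := by gcongr
    _ = x / Real.exp ℓ := by
        rw [two_mul, Real.exp_add]
        field_simp

theorem eventually_mul_cube_pow_lt_exp (M : ℕ) :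
    ∀ᶠ ℓ : ℝ in atTop, 24 * (2 * ℓ ^ 3) ^ M < Real.exp ℓ := by
  have hlim := (Real.isLittleO_pow_exp_atTop (n := 3 * M)).const_mul_left (24 * 2 ^ M)
  filter_upwards [hlim.bound (half_pos one_pos), eventually_ge_atTop 0] with ℓ hbound hℓ
  rw [Real.norm_of_nonneg (by positivity), Real.norm_of_nonneg (by positivity)] at hbound
  calc 24 * (2 * ℓ ^ 3) ^ M = 24 * 2 ^ M * ℓ ^ (3 * M) := by ring
    _ ≤ 1 / 2 * Real.exp ℓ := hbound
    _ < Real.exp ℓ := by linarith [Real.exp_pos ℓ]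

theorem phi_equal_count_ell_one_general {k : ℕ} (hk : k ≠ 0) : ∀ᶠ x : ℝ in atTop,
    ({n : ℕ | (n : ℝ) ≤ x ∧ n.totient = (n + k).totient ∧ ¬ IsExceptional k n}.ncard : ℝ) <
      x / Real.exp ((Real.log x) ^ ((1 : ℝ) / 3)) := by
  classical
  have hcount : ∀ᶠ ℓ : ℝ in atTop, (#{n ∈ Ioc 0 ⌊Real.exp (ℓ ^ 3)⌋₊ |
      n.totient = (n + k).totient ∧ ¬ IsExceptional k n} : ℝ) <
      Real.exp (ℓ ^ 3) / Real.exp ℓ := by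
    filter_upwards [eventually_ge_atTop 10, eventually_ge_atTop (k : ℝ),
      eventually_mul_cube_pow_lt_exp ⌈Real.exp 12⌉₊] with ℓ hℓ hkℓ hexp
    exact card_filter_totient_eq_lt hk hℓ hkℓ (Nat.le_ceil _) hexp
  have hlog : Tendsto (fun x => Real.log x ^ ((1 : ℝ) / 3)) atTop atTop :=
    (tendsto_rpow_atTop (by norm_num)).comp Real.tendsto_log_atTop
  filter_upwards [hlog.eventually hcount, eventually_ge_atTop 1] with x hx hx1
  have hcube : Real.exp ((Real.log x ^ ((1 : ℝ) / 3)) ^ 3) = x := by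
    rw [← Real.rpow_mul_natCast (Real.log_nonneg hx1)]
    norm_num [Real.exp_log (zero_lt_one.trans_le hx1)]
  rw [hcube] at hx
  refine hx.trans_le' (Nat.cast_le.2 ?_)
  rw [← Set.ncard_coe_finset]
  refine Set.ncard_le_ncard (fun n hn => ?_) (finite_toSet _)
  have hn0 : n ≠ 0 := by
    rintro rfl
    exact hk (Nat.totient_eq_zero.1 ((zero_add k ▸ hn.2.1).symm.trans Nat.totient_zero))
  exact mem_coe.2 (mem_filter.2
    ⟨mem_Ioc.2 ⟨Nat.pos_of_ne_zero hn0, Nat.le_floor hn.1⟩, hn.2⟩)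

/-! ### Shift two -/

theorem eq_two_of_primeFactors_eq_add_two {j : ℕ} (h : j.primeFactors = (j + 2).primeFactors) :
    j = 2 := by
  have hj : j ≠ 0 := by
    rintro rfl
    simp [Nat.prime_two.primeFactors] at h
  have hprime {d : ℕ} (hd : d.Prime) (hdj : d ∣ j) : d = 2 := by
    have hmem : d ∈ (j + 2).primeFactors := h ▸ Nat.mem_primeFactors.2 ⟨hd, hdj, hj⟩
    exact (Nat.prime_dvd_prime_iff_eq hd Nat.prime_two).1
      ((Nat.dvd_add_right hdj).1 (Nat.dvd_of_mem_primeFactors hmem))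
  have hprime' {d : ℕ} (hd : d.Prime) (hdj : d ∣ j + 2) : d = 2 := by
    have hmem : d ∈ j.primeFactors := h ▸ Nat.mem_primeFactors.2 ⟨hd, hdj, by lia⟩
    exact hprime hd (Nat.dvd_of_mem_primeFactors hmem)
  obtain ⟨a, ha⟩ : ∃ a, j = 2 ^ a := ⟨_, Nat.eq_prime_pow_of_unique_prime_dvd hj hprime⟩
  obtain ⟨b, hb⟩ : ∃ b, j + 2 = 2 ^ b :=
    ⟨_, Nat.eq_prime_pow_of_unique_prime_dvd (by lia) hprime'⟩
  rcases a with - | - | a <;> rcases b with - | - | b <;> lia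

theorem eq_ten_of_isExceptional_two {n : ℕ} (h : IsExceptional 2 n) (hprime : (n + 1).Prime) :
    n = 10 := by
  obtain ⟨j, p, q, hj, hp, hq⟩ := h
  obtain rfl := eq_two_of_primeFactors_eq_add_two hj
  have hn := hp.eq_mul
  have hn' := hq.eq_mul
  have hpq : p + 1 = 2 * q := by lia
  have hq_ge := hq.prime.two_le
  have hq_ne : q ≠ 2 := by
    rintro rfl
    exact hq.not_dvd (by norm_num)
  -- One of `q`, `n + 1 = 4 * q - 1` and `p = 2 * q - 1` is divisible by `3`.
  have h3 : q % 3 = 0 ∨ q % 3 = 1 ∨ q % 3 = 2 := by lia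
  have hmod {r : ℕ} (hr : r.Prime) (h3r : r % 3 = 0) : r = 3 :=
    ((Nat.prime_dvd_prime_iff_eq Nat.prime_three hr).1 (Nat.dvd_of_mod_eq_zero h3r)).symm
  rcases h3 with h0 | h1 | h2
  · have := hmod hq.prime h0
    lia
  · have := hmod hprime (by lia)
    lia
  · have := hmod hp.prime (by lia)
    lia

theorem ncard_prime_totient_eq_le (x : ℝ) :
    ({p : ℕ | p.Prime ∧ Odd p ∧ (p : ℝ) ≤ x ∧
        (p - 1).totient = (p + 1).totient}.ncard : ℝ) ≤
      {n : ℕ | (n : ℝ) ≤ x ∧ n.totient = (n + 2).totient ∧ ¬ IsExceptional 2 n}.ncard + 1 := by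
  set S := {n : ℕ | (n : ℝ) ≤ x ∧ n.totient = (n + 2).totient ∧ ¬ IsExceptional 2 n}
  have hS : S.Finite := (Set.finite_Iic ⌊x⌋₊).subset fun _ hn => Nat.le_floor hn.1
  have hsub : {p : ℕ | p.Prime ∧ Odd p ∧ (p : ℝ) ≤ x ∧ (p - 1).totient = (p + 1).totient} ⊆
      insert 11 ((· + 1) '' S) := by
    rintro p ⟨hp, -, hpx, hφ⟩
    obtain ⟨n, rfl⟩ := Nat.exists_eq_succ_of_ne_zero hp.ne_zero
    by_cases hexc : IsExceptional 2 n
    · exact .inl (congrArg Nat.succ (eq_ten_of_isExceptional_two hexc hp))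
    · exact .inr ⟨n, ⟨(Nat.cast_le.2 n.le_succ).trans hpx, hφ, hexc⟩, rfl⟩
  norm_cast
  calc _ ≤ (insert 11 ((· + 1) '' S)).ncard := Set.ncard_le_ncard hsub ((hS.image _).insert 11)
    _ ≤ ((· + 1) '' S).ncard + 1 := Set.ncard_insert_le _ _
    _ ≤ S.ncard + 1 := Nat.add_le_add_right (Set.ncard_image_le hS) 1

theorem phi_equal_count_ell_one : ∀ᶠ x : ℝ in atTop,
    ({p : ℕ | p.Prime ∧ Odd p ∧ (p : ℝ) ≤ x ∧
        Nat.totient (p - 1) = Nat.totient (p + 1)}.ncard : ℝ) <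
      x / Real.exp ((Real.log x) ^ ((1 : ℝ) / 3)) + 2 := by
  filter_upwards [phi_equal_count_ell_one_general two_ne_zero] with x hx
  linarith [ncard_prime_totient_eq_le x]
end

section
/- If t is a positive integer such that t+1, 2t+1, and 4t+3 are all prime, then t = 1 or t = 2 (yielding the prime triples (2,3,7) and (3,5,11)). -/
theorem three_dvd_add_one_or_two_mul_add_one_or_four_mul_add_three (t : ℕ) :
    3 ∣ t + 1 ∨ 3 ∣ 2 * t + 1 ∨ 3 ∣ 4 * t + 3 := by
  -- Modulo 3 the three numbers are congruent to `t + 1`, `-(t - 1)` and `t`.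
  obtain hmod | hmod | hmod : t % 3 = 2 ∨ t % 3 = 1 ∨ t % 3 = 0 := by omega
  · left
    omega
  · right; left
    omega
  · right; right
    omega

theorem prime_triple_classification (t : ℕ) (ht : 0 < t)
    (h1 : Nat.Prime (t + 1)) (h2 : Nat.Prime (2 * t + 1))
    (h3 : Nat.Prime (4 * t + 3)) : t = 1 ∨ t = 2 := by
  rcases three_dvd_add_one_or_two_mul_add_one_or_four_mul_add_three t with hdvd | hdvd | hdvd
  · have h_eq : 3 = t + 1 := (Nat.prime_dvd_prime_iff_eq Nat.prime_three h1).mp hdvd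
    right
    omega
  · have h_eq : 3 = 2 * t + 1 := (Nat.prime_dvd_prime_iff_eq Nat.prime_three h2).mp hdvd
    left
    omega
  · have h_eq : 3 = 4 * t + 3 := (Nat.prime_dvd_prime_iff_eq Nat.prime_three h3).mp hdvd
    omega
end

section
/- Let j, k, t be positive integers such that j and j+k have exactly the same set of prime divisors, and set g = gcd(j, j+k). Suppose q₁ = jt/g + 1 and q₂ = (j+k)t/g + 1 are prime numbers, neither of which divides j. Then the integer n = j · ((j+k)t/g + 1) satisfies φ(n) = φ(n+k). -/
/-!
Write `a = jt/g` and `b = (j + k)t/g`, so that `j * b = (j + k) * a` and hence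
`n + k = j * (b + 1) + k = (j + k) * (a + 1)`. Euler's product shows that `φ(m) / m` depends only
on the prime divisors of `m`, so `φ(j) / φ(j + k) = j / (j + k) = a / b`. As `b + 1 ∤ j` and
`a + 1 ∤ j + k`, this gives `φ(n) = φ(j) * b = φ(j + k) * a = φ(n + k)`.
-/

theorem primeFactors_eq_of_forall_prime_dvd_iff {m n : ℕ} (hm : m ≠ 0) (hn : n ≠ 0)
    (h : ∀ p : ℕ, p.Prime → (p ∣ m ↔ p ∣ n)) : m.primeFactors = n.primeFactors := by
  ext p
  rw [Nat.mem_primeFactors_of_ne_zero hm, Nat.mem_primeFactors_of_ne_zero hn]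
  exact and_congr_right (h p)

theorem totient_mul_eq_mul_totient_of_primeFactors_eq {m n : ℕ}
    (h : m.primeFactors = n.primeFactors) : m.totient * n = m * n.totient := by
  have cast_eq : (m.totient : ℚ) * n = m * n.totient := by
    rw [Nat.totient_eq_mul_prod_factors m, Nat.totient_eq_mul_prod_factors n, h]
    ring
  exact_mod_cast cast_eq

theorem mul_mul_div_left_comm {m n t d : ℕ} (hm : d ∣ m * t) (hn : d ∣ n * t) :
    m * (n * t / d) = n * (m * t / d) := by
  rw [← Nat.mul_div_assoc m hn, ← Nat.mul_div_assoc n hm, mul_left_comm]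

theorem totient_mul_add_one_of_prime_of_not_dvd {m a : ℕ} (ha : (a + 1).Prime)
    (ham : ¬ a + 1 ∣ m) : (m * (a + 1)).totient = m.totient * a := by
  rw [mul_comm, Nat.totient_mul_of_prime_of_not_dvd ha ham, Nat.add_sub_cancel, mul_comm]

theorem totient_mul_add_one_eq_totient_mul_add_one {m n a b : ℕ}
    (htot : m.totient * n = m * n.totient) (hab : m * b = n * a)
    (ha : (a + 1).Prime) (hb : (b + 1).Prime) (han : ¬ a + 1 ∣ n) (hbm : ¬ b + 1 ∣ m) :
    (m * (b + 1)).totient = (n * (a + 1)).totient := by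
  have hm : m ≠ 0 := by
    rintro rfl
    exact hbm (dvd_zero _)
  rw [totient_mul_add_one_of_prime_of_not_dvd hb hbm,
    totient_mul_add_one_of_prime_of_not_dvd ha han]
  apply mul_left_cancel₀ hm
  calc m * (m.totient * b) = m.totient * (m * b) := mul_left_comm _ _ _
    _ = m.totient * n * a := by rw [hab, mul_assoc]
    _ = m * (n.totient * a) := by rw [htot, mul_assoc]

theorem graham_holt_pomerance_construction (j k t : ℕ) (hj : 0 < j) (hk : 0 < k)
    (ht : 0 < t)
    (hsame : ∀ q : ℕ, q.Prime → (q ∣ j ↔ q ∣ (j + k)))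
    (hq₁ : Nat.Prime (j * t / Nat.gcd j (j + k) + 1))
    (hq₂ : Nat.Prime ((j + k) * t / Nat.gcd j (j + k) + 1))
    (hq₁j : ¬ (j * t / Nat.gcd j (j + k) + 1) ∣ j)
    (hq₂j : ¬ ((j + k) * t / Nat.gcd j (j + k) + 1) ∣ j) :
    Nat.totient (j * ((j + k) * t / Nat.gcd j (j + k) + 1)) =
      Nat.totient (j * ((j + k) * t / Nat.gcd j (j + k) + 1) + k) := by
  have hab : j * ((j + k) * t / j.gcd (j + k)) = (j + k) * (j * t / j.gcd (j + k)) :=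
    mul_mul_div_left_comm ((Nat.gcd_dvd_left _ _).mul_right t) ((Nat.gcd_dvd_right _ _).mul_right t)
  have hshift : j * ((j + k) * t / j.gcd (j + k) + 1) + k =
      (j + k) * (j * t / j.gcd (j + k) + 1) := by
    rw [mul_add_one, hab, mul_add_one, add_assoc]
  have htot : j.totient * (j + k) = j * (j + k).totient :=
    totient_mul_eq_mul_totient_of_primeFactors_eq <|
      primeFactors_eq_of_forall_prime_dvd_iff hj.ne' (by lia) hsame
  rw [hshift]
  exact totient_mul_add_one_eq_totient_mul_add_one htot hab hq₁ hq₂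
    (mt (hsame _ hq₁).mpr hq₁j) hq₂j
end

section
/- Fix a positive integer ℓ. The set of primes p > ℓ for which the integer φ(p−ℓ) − φ(p+ℓ) and the rational number φ(p−ℓ)/(p−ℓ) − φ(p+ℓ)/(p+ℓ) have the same sign (equivalently, the sign of φ(p−ℓ) − φ(p+ℓ) equals the sign of (p+ℓ)·φ(p−ℓ) − (p−ℓ)·φ(p+ℓ)) has counting function asymptotic to π(x); that is, the number of such primes p ≤ x, divided by π(x), tends to 1 as x → ∞. -/
open Filter Topology

/-!
Split `φ(n) / n` into its Euler factors at primes `r ≤ y` and `r > y`. On average over primes `p`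
the factors of `p ± ℓ` at primes above `y` are close to `1`, so the two signs can differ only if
the part `T(p)` of `(φ(p - ℓ) / (p - ℓ)) / (φ(p + ℓ) / (p + ℓ))` coming from the primes up to `y`
is close to `1`. It depends only on `p` modulo the primorial of `y`.

Fix a finite set `R` of primes `r > 2ℓ`. Once the residues of `p` modulo the primes outside `R` are
given, the part of `T(p)` coming from `R` is confined to a short interval, and as it takes finitely
many values it is determined. Its value determines every exponent in
`∏ r ∈ R, (1 - 1/r) ^ e r`: the largest prime with `e r ≠ 0` survives in the `r`-adic valuation. So
for each `r ∈ R` one of the statements `r ∣ p - ℓ`, `r ∣ p + ℓ` has a prescribed truth value, which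
costs at least one of the `r - 1` reduced residues modulo `r`. The exceptional residues thus have
density at most `∏ r ∈ R, (r - 2) / (r - 1)`, which is arbitrarily small since `∑ 1/r` diverges.

Primes in residue classes are counted by a Brun–Titchmarsh bound, obtained from Selberg's sieve.
-/

section SelbergSieve

open Finset BoundingSieve
open scoped ArithmeticFunction.Moebius

variable {s : BoundingSieve}

/-- The sum `S = ∑_{l ∣ P, l ≤ z} g(l)` of the terms `g` of a sieve, the reciprocal of the minimal
main term of Selberg's sieve with weights supported on `[1, z]`. -/
noncomputable def selbergMass (s : BoundingSieve) (z : ℕ) : ℝ :=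
  ∑ l ∈ s.prodPrimes.divisors with l ≤ z, s.selbergTerms l

/-- Selberg's optimal weights `μ(d) ν(d)⁻¹ S⁻¹ ∑_{d ∣ l ∣ P, l ≤ z} g(l)` for the `Λ²` sieve. -/
noncomputable def selbergWeight (s : BoundingSieve) (z d : ℕ) : ℝ :=
  μ d / s.nu d * (∑ l ∈ s.prodPrimes.divisors with l ≤ z ∧ d ∣ l, s.selbergTerms l) /
    selbergMass s z

lemma selbergMass_pos {z : ℕ} (hz : 1 ≤ z) : 0 < selbergMass s z :=
  sum_pos (fun _ hl ↦ selbergTerms_pos (Nat.dvd_of_mem_divisors (mem_filter.1 hl).1))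
    ⟨1, mem_filter.2 ⟨Nat.one_mem_divisors.2 prodPrimes_ne_zero, hz⟩⟩

lemma selbergWeight_one {z : ℕ} (hz : 1 ≤ z) : selbergWeight s z 1 = 1 := by
  simp only [selbergWeight, one_dvd, and_true, s.nu_mult.map_one,
    ArithmeticFunction.moebius_apply_one, Int.cast_one, div_one, one_mul]
  exact div_self (selbergMass_pos hz).ne'

lemma selbergWeight_eq_zero_of_lt {z d : ℕ} (hd : z < d) : selbergWeight s z d = 0 := by
  have h_empty : {l ∈ s.prodPrimes.divisors | l ≤ z ∧ d ∣ l} = ∅ := by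
    refine filter_eq_empty_iff.2 fun l hl hlz ↦ ?_
    have := Nat.le_of_dvd (Nat.pos_of_mem_divisors hl) hlz.2
    lia
  rw [selbergWeight, h_empty, sum_empty, mul_zero, zero_div]

lemma abs_selbergWeight_le {z d : ℕ} (hz : 1 ≤ z) (hd : d ∣ s.prodPrimes) :
    |selbergWeight s z d| ≤ (s.nu d)⁻¹ := by
  have hμ : |(μ d : ℝ)| ≤ 1 := mod_cast ArithmeticFunction.abs_moebius_le_one
  have h_nonneg : ∀ l ∈ s.prodPrimes.divisors, 0 ≤ s.selbergTerms l := fun l hl ↦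
    (selbergTerms_pos (Nat.dvd_of_mem_divisors hl)).le
  have h_sum : ∑ l ∈ s.prodPrimes.divisors with l ≤ z ∧ d ∣ l, s.selbergTerms l ≤
      selbergMass s z :=
    sum_le_sum_of_subset_of_nonneg (monotone_filter_right _ fun _ _ hl ↦ hl.1)
      fun l hl _ ↦ h_nonneg l (mem_filter.1 hl).1
  have hν := nu_pos_of_dvd_prodPrimes hd
  have h_ratio : 0 ≤ (∑ l ∈ s.prodPrimes.divisors with l ≤ z ∧ d ∣ l, s.selbergTerms l) /
      selbergMass s z :=
    div_nonneg (sum_nonneg fun l hl ↦ h_nonneg l (mem_filter.1 hl).1) (selbergMass_pos hz).le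
  rw [selbergWeight, mul_div_assoc, abs_mul, abs_div, abs_of_pos hν, div_eq_mul_inv,
    abs_of_nonneg h_ratio]
  calc |(μ d : ℝ)| * (s.nu d)⁻¹ * _ ≤ 1 * (s.nu d)⁻¹ * 1 := by
        gcongr
        exact div_le_one_of_le₀ h_sum (selbergMass_pos hz).le
    _ = (s.nu d)⁻¹ := by ring

lemma sum_moebius_of_dvd_of_dvd {P l m : ℕ} (hP : Squarefree P) (hm : m ∣ P) :
    ∑ d ∈ P.divisors with l ∣ d ∧ d ∣ m, (μ d : ℝ) = if m = l then (μ l : ℝ) else 0 := by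
  by_cases hlm : l ∣ m
  · obtain ⟨k, rfl⟩ := hlm
    have hlk_sq : Squarefree (l * k) := hP.squarefree_of_dvd hm
    obtain ⟨h_coprime, -, -⟩ := Nat.squarefree_mul_iff.1 hlk_sq
    have hl : 0 < l := Nat.pos_of_ne_zero (left_ne_zero_of_mul hlk_sq.ne_zero)
    have h_image : {d ∈ P.divisors | l ∣ d ∧ d ∣ l * k} = k.divisors.image (l * ·) := by
      ext d
      simp only [mem_filter, Nat.mem_divisors, mem_image]
      constructor
      · rintro ⟨-, ⟨e, rfl⟩, he⟩
        exact ⟨e, ⟨Nat.dvd_of_mul_dvd_mul_left hl he, right_ne_zero_of_mul hlk_sq.ne_zero⟩, rfl⟩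
      · rintro ⟨e, ⟨he, -⟩, rfl⟩
        have := mul_dvd_mul_left l he
        exact ⟨⟨this.trans hm, hP.ne_zero⟩, dvd_mul_right .., this⟩
    rw [h_image, sum_image fun _ _ _ _ h ↦ Nat.eq_of_mul_eq_mul_left hl h]
    calc ∑ e ∈ k.divisors, (μ (l * e) : ℝ) = (μ l * ∑ e ∈ k.divisors, μ e : ℤ) := by
          push_cast
          rw [mul_sum]
          refine sum_congr rfl fun e he ↦ ?_
          rw [ArithmeticFunction.isMultiplicative_moebius.map_mul_of_coprime
            (h_coprime.coprime_dvd_right (Nat.dvd_of_mem_divisors he)), Int.cast_mul]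
      _ = _ := by
          rw [← ArithmeticFunction.coe_mul_zeta_apply, ArithmeticFunction.moebius_mul_coe_zeta,
            ArithmeticFunction.one_apply]
          simp [Nat.mul_eq_left hl.ne']
  · rw [if_neg (by rintro rfl; exact hlm dvd_rfl), filter_eq_empty_iff.2, sum_empty]
    exact fun d _ hd ↦ hlm (hd.1.trans hd.2)

lemma sum_nu_mul_selbergWeight {z l : ℕ} (hl : l ∣ s.prodPrimes) :
    (∑ d ∈ s.prodPrimes.divisors, if l ∣ d then s.nu d * selbergWeight s z d else 0) =
      if l ≤ z then μ l * s.selbergTerms l / selbergMass s z else 0 := by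
  calc (∑ d ∈ s.prodPrimes.divisors, if l ∣ d then s.nu d * selbergWeight s z d else 0)
      = ∑ d ∈ s.prodPrimes.divisors, ∑ m ∈ s.prodPrimes.divisors with m ≤ z,
          if l ∣ d ∧ d ∣ m then (μ d : ℝ) * (s.selbergTerms m / selbergMass s z) else 0 := by
        refine sum_congr rfl fun d hd ↦ ?_
        have hν := nu_ne_zero (Nat.dvd_of_mem_divisors hd)
        rw [← sum_filter, filter_filter]
        split_ifs with hld
        · simp only [hld, true_and, selbergWeight, ← mul_sum, ← sum_div]
          field_simp
        · simp [hld]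
    _ = ∑ m ∈ s.prodPrimes.divisors with m ≤ z,
          (if m = l then (μ l : ℝ) else 0) * (s.selbergTerms m / selbergMass s z) := by
        rw [sum_comm]
        refine sum_congr rfl fun m hm ↦ ?_
        rw [← sum_filter, ← sum_mul, sum_moebius_of_dvd_of_dvd s.prodPrimes_squarefree
          (Nat.dvd_of_mem_divisors (mem_filter.1 hm).1)]
    _ = if l ≤ z then μ l * s.selbergTerms l / selbergMass s z else 0 := by
        simp [ite_mul, hl, prodPrimes_ne_zero, mul_div_assoc]

lemma mainSum_lambdaSquared_selbergWeight {z : ℕ} (hz : 1 ≤ z) :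
    s.mainSum (lambdaSquared (selbergWeight s z)) = (selbergMass s z)⁻¹ := by
  have hS := (selbergMass_pos (s := s) hz).ne'
  calc s.mainSum (lambdaSquared (selbergWeight s z))
      = ∑ l ∈ s.prodPrimes.divisors,
          if l ≤ z then s.selbergTerms l / selbergMass s z ^ 2 else 0 := by
        rw [mainSum_lambdaSquared_eq_sum_mul_sum_sq]
        refine sum_congr rfl fun l hl ↦ ?_
        have hlP := Nat.dvd_of_mem_divisors hl
        have hg := (selbergTerms_pos hlP).ne'
        have hμ : (μ l : ℝ) ^ 2 = 1 := mod_cast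
          ArithmeticFunction.moebius_sq_eq_one_of_squarefree (squarefree_of_dvd_prodPrimes hlP)
        rw [sum_nu_mul_selbergWeight hlP]
        split_ifs
        · rw [div_pow, mul_pow, hμ]
          field_simp
        · simp
    _ = (selbergMass s z)⁻¹ := by
        rw [← sum_filter, ← sum_div, ← selbergMass, sq, div_self_mul_self']

lemma errSum_lambdaSquared_le {w : ℕ → ℝ}
    (h_rem : ∀ d, d ∣ s.prodPrimes → |s.rem d| ≤ 1) :
    s.errSum (lambdaSquared w) ≤ (∑ d ∈ s.prodPrimes.divisors, |w d|) ^ 2 := by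
  set D := s.prodPrimes.divisors
  calc s.errSum (lambdaSquared w)
      ≤ ∑ d ∈ D, ∑ d₁ ∈ D, ∑ d₂ ∈ D, if d = d₁.lcm d₂ then |w d₁| * |w d₂| else 0 := by
        refine sum_le_sum fun d hd ↦ ?_
        have hdP := Nat.dvd_of_mem_divisors hd
        have hdD : d.divisors ⊆ D := Nat.divisors_subset_of_dvd prodPrimes_ne_zero hdP
        refine (mul_le_of_le_one_right (abs_nonneg _) (h_rem d hdP)).trans ?_
        refine (abs_sum_le_sum_abs _ _).trans ((sum_le_sum fun d₁ _ ↦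
          (abs_sum_le_sum_abs _ _).trans (sum_le_sum_of_subset_of_nonneg hdD
            fun _ _ _ ↦ abs_nonneg _)).trans ?_)
        refine (sum_le_sum_of_subset_of_nonneg hdD
          fun _ _ _ ↦ sum_nonneg fun _ _ ↦ abs_nonneg _).trans_eq ?_
        simp only [apply_ite abs, abs_mul, abs_zero]
    _ = ∑ d₁ ∈ D, ∑ d₂ ∈ D, |w d₁| * |w d₂| := by
        rw [sum_comm]
        refine sum_congr rfl fun d₁ h₁ ↦ ?_
        rw [sum_comm]
        refine sum_congr rfl fun d₂ h₂ ↦ ?_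
        exact sum_ite_eq_of_mem' D _ _ (Nat.mem_divisors.2 ⟨Nat.lcm_dvd
          (Nat.dvd_of_mem_divisors h₁) (Nat.dvd_of_mem_divisors h₂), prodPrimes_ne_zero⟩)
    _ = (∑ d ∈ D, |w d|) ^ 2 := by rw [sq, sum_mul_sum]

theorem siftedSum_le_div_selbergMass {z : ℕ} (hz : 1 ≤ z)
    (h_rem : ∀ d, d ∣ s.prodPrimes → |s.rem d| ≤ 1) :
    s.siftedSum ≤ s.totalMass / selbergMass s z +
      (∑ d ∈ s.prodPrimes.divisors with d ≤ z, (s.nu d)⁻¹) ^ 2 := by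
  refine (siftedSum_le_mainSum_errSum_of_upperMoebius _
    (upperMoebius_lambdaSquared _ (selbergWeight_one (s := s) hz))).trans ?_
  rw [mainSum_lambdaSquared_selbergWeight hz, div_eq_mul_inv]
  gcongr
  refine (errSum_lambdaSquared_le h_rem).trans ?_
  gcongr
  rw [sum_filter]
  refine sum_le_sum fun d hd ↦ ?_
  split_ifs with hdz
  · exact abs_selbergWeight_le hz (Nat.dvd_of_mem_divisors hd)
  · rw [selbergWeight_eq_zero_of_lt (not_le.1 hdz), abs_zero]

end SelbergSieve

section Totient

open Finset

lemma totient_prod_of_prime {S : Finset ℕ} (hS : ∀ r ∈ S, r.Prime) :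
    (∏ r ∈ S, r).totient = ∏ r ∈ S, (r - 1) := by
  induction S using Finset.induction_on with
  | empty => simp
  | insert p S hp ih =>
    rw [forall_mem_insert] at hS
    rw [prod_insert hp, prod_insert hp, Nat.totient_mul, ih hS.2, Nat.totient_prime hS.1]
    exact Nat.Coprime.prod_right fun r hr ↦
      (Nat.coprime_primes hS.1 (hS.2 r hr)).2 (ne_of_mem_of_not_mem hr hp).symm

lemma totient_eq_mul_prod_one_sub_inv (n : ℕ) :
    (n.totient : ℝ) = n * ∏ p ∈ n.primeFactors, (1 - (p : ℝ)⁻¹) := by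
  have h := congrArg (Rat.cast : ℚ → ℝ) (Nat.totient_eq_mul_prod_factors n)
  push_cast at h
  exact h

lemma sum_squarefree_divisors_inv_totient {q : ℕ} (hq : q ≠ 0) :
    ∑ l ∈ q.divisors with Squarefree l, (l.totient : ℝ)⁻¹ = q / q.totient := by
  have h_euler : (q : ℝ) / q.totient = ∏ p ∈ q.primeFactors, (1 - (p : ℝ)⁻¹)⁻¹ := by
    rw [totient_eq_mul_prod_one_sub_inv, prod_inv_distrib, div_mul_cancel_left₀ (by simpa)]
  rw [h_euler, Nat.sum_divisors_filter_squarefree hq, Nat.factors_eq]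
  calc ∑ T ∈ q.primeFactors.powerset, ((T.val.prod).totient : ℝ)⁻¹
      = ∑ T ∈ q.primeFactors.powerset, ∏ p ∈ T, ((p : ℝ) - 1)⁻¹ := by
        refine sum_congr rfl fun T hT ↦ ?_
        have hT_prime : ∀ p ∈ T, p.Prime := fun p hp ↦
          Nat.prime_of_mem_primeFactors (mem_powerset.1 hT hp)
        rw [prod_val, prod_congr rfl fun p _ ↦ id_eq p, totient_prod_of_prime hT_prime,
          Nat.cast_prod, ← prod_inv_distrib]
        exact prod_congr rfl fun p hp ↦ by rw [Nat.cast_sub (hT_prime p hp).one_le, Nat.cast_one]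
    _ = ∏ p ∈ q.primeFactors, (1 + ((p : ℝ) - 1)⁻¹) := (prod_one_add _).symm
    _ = ∏ p ∈ q.primeFactors, (1 - (p : ℝ)⁻¹)⁻¹ := by
        refine prod_congr rfl fun p hp ↦ ?_
        have hp : (1 : ℝ) < p := mod_cast (Nat.prime_of_mem_primeFactors hp).one_lt
        have : (p : ℝ) - 1 ≠ 0 := by linarith
        field_simp
        ring

lemma sum_Ioc_inv_sq_le_inv {k : ℕ} (hk : k ≠ 0) (n : ℕ) :
    ∑ i ∈ Ioc k n, ((i : ℝ) ^ 2)⁻¹ ≤ (k : ℝ)⁻¹ := by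
  rcases le_total k n with hkn | hnk
  · exact (sum_Ioc_inv_sq_le_sub hk hkn).trans (sub_le_self _ (by positivity))
  · rw [Ioc_eq_empty_of_le hnk, sum_empty]
    positivity

lemma sum_Icc_inv_sq_le_two (n : ℕ) : ∑ b ∈ Icc 1 n, ((b : ℝ) ^ 2)⁻¹ ≤ 2 := by
  rcases Nat.eq_zero_or_pos n with rfl | hn
  · simp
  · have h := sum_Ioc_inv_sq_le_inv one_ne_zero n
    rw [← add_sum_Ioc_eq_sum_Icc hn]
    norm_num at h ⊢
    linarith

lemma log_le_sum_Icc_inv (z : ℕ) : Real.log z ≤ ∑ n ∈ Icc 1 z, (n : ℝ)⁻¹ := by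
  have h := log_add_one_le_harmonic z
  rw [harmonic_eq_sum_Icc] at h
  push_cast at h
  refine le_trans ?_ h
  rcases Nat.eq_zero_or_pos z with rfl | hz
  · simp
  · exact Real.log_le_log (mod_cast hz) (by linarith)

lemma log_le_two_mul_sum_squarefree_inv_totient (z : ℕ) :
    Real.log z ≤ 2 * ∑ k ∈ Icc 1 z with Squarefree k, (k.totient : ℝ)⁻¹ := by
  choose k b h_factor hk using Nat.sq_mul_squarefree
  have h_inj : Function.Injective fun n ↦ (k n, b n) := fun m n h ↦ by
    obtain ⟨hk_eq, hb_eq⟩ := Prod.mk.inj h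
    rw [← h_factor m, ← h_factor n, hk_eq, hb_eq]
  have h_image : (Icc 1 z).image (fun n ↦ (k n, b n)) ⊆
      {k ∈ Icc 1 z | Squarefree k} ×ˢ Icc 1 z := by
    refine image_subset_iff.2 fun n hn ↦ ?_
    obtain ⟨hn₁, hnz⟩ := mem_Icc.1 hn
    have hk_dvd : k n ∣ n := Dvd.intro_left _ (h_factor n)
    have hb_dvd : b n ∣ n :=
      ((dvd_pow_self (b n) two_ne_zero).mul_right (k n)).trans (h_factor n).dvd
    exact mem_product.2 ⟨mem_filter.2 ⟨mem_Icc.2 ⟨Nat.pos_of_dvd_of_pos hk_dvd hn₁,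
      (Nat.le_of_dvd hn₁ hk_dvd).trans hnz⟩, hk n⟩, mem_Icc.2 ⟨Nat.pos_of_dvd_of_pos hb_dvd hn₁,
      (Nat.le_of_dvd hn₁ hb_dvd).trans hnz⟩⟩
  calc Real.log z ≤ ∑ n ∈ Icc 1 z, (n : ℝ)⁻¹ := log_le_sum_Icc_inv z
    _ = ∑ kb ∈ (Icc 1 z).image (fun n ↦ (k n, b n)), (kb.1 : ℝ)⁻¹ * ((kb.2 : ℝ) ^ 2)⁻¹ := by
        rw [sum_image h_inj.injOn]
        refine sum_congr rfl fun n _ ↦ ?_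
        rw [← mul_inv, mul_comm]
        exact_mod_cast congrArg (fun m : ℕ ↦ (m : ℝ)⁻¹) (h_factor n).symm
    _ ≤ ∑ kb ∈ {k ∈ Icc 1 z | Squarefree k} ×ˢ Icc 1 z, (kb.1 : ℝ)⁻¹ * ((kb.2 : ℝ) ^ 2)⁻¹ :=
        sum_le_sum_of_subset_of_nonneg h_image fun _ _ _ ↦ by positivity
    _ = (∑ k ∈ Icc 1 z with Squarefree k, (k : ℝ)⁻¹) * ∑ b ∈ Icc 1 z, ((b : ℝ) ^ 2)⁻¹ := by
        rw [sum_mul_sum, sum_product]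
    _ ≤ (∑ k ∈ Icc 1 z with Squarefree k, (k.totient : ℝ)⁻¹) * 2 := by
        gcongr with k hk
        · exact Nat.cast_pos.2 (Nat.totient_pos.2 (mem_Icc.1 (mem_filter.1 hk).1).1)
        · exact Nat.totient_le k
        · exact sum_Icc_inv_sq_le_two z
    _ = _ := mul_comm _ _

lemma sum_squarefree_inv_totient_le_mul_sum_coprime (z : ℕ) {q : ℕ} (hq : q ≠ 0) :
    ∑ k ∈ Icc 1 z with Squarefree k, (k.totient : ℝ)⁻¹ ≤
      q / q.totient * ∑ k ∈ Icc 1 z with Squarefree k ∧ k.Coprime q, (k.totient : ℝ)⁻¹ := by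
  set split : ℕ → ℕ × ℕ := fun k ↦ (k.gcd q, k / k.gcd q)
  have h_mul (k : ℕ) : (split k).1 * (split k).2 = k := Nat.mul_div_cancel' (Nat.gcd_dvd_left k q)
  have h_inj : Function.Injective split := fun a b h ↦ by rw [← h_mul a, ← h_mul b, h]
  have h_coprime {k : ℕ} (hk : Squarefree k) : (split k).1.Coprime (split k).2 :=
    Nat.coprime_of_squarefree_mul ((h_mul k).symm ▸ hk)
  have h_image : {k ∈ Icc 1 z | Squarefree k}.image split ⊆
      {l ∈ q.divisors | Squarefree l} ×ˢ {k ∈ Icc 1 z | Squarefree k ∧ k.Coprime q} := by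
    refine image_subset_iff.2 fun k hk ↦ ?_
    rw [mem_filter, mem_Icc] at hk
    obtain ⟨⟨hk₁, hkz⟩, hk_sq⟩ := hk
    have h_dvd₁ : (split k).1 ∣ k := Dvd.intro _ (h_mul k)
    have h_dvd₂ : (split k).2 ∣ k := Dvd.intro_left _ (h_mul k)
    simp only [mem_product, mem_filter, Nat.mem_divisors, mem_Icc]
    refine ⟨⟨⟨Nat.gcd_dvd_right k q, hq⟩, hk_sq.squarefree_of_dvd h_dvd₁⟩,
      ⟨Nat.pos_of_dvd_of_pos h_dvd₂ hk₁, (Nat.le_of_dvd hk₁ h_dvd₂).trans hkz⟩,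
      hk_sq.squarefree_of_dvd h_dvd₂, ?_⟩
    exact Nat.eq_one_of_dvd_coprimes (h_coprime hk_sq)
      (Nat.dvd_gcd ((Nat.gcd_dvd_left _ _).trans h_dvd₂) (Nat.gcd_dvd_right _ _))
      (Nat.gcd_dvd_left _ _)
  rw [← sum_squarefree_divisors_inv_totient hq, sum_mul_sum, ← sum_product']
  calc ∑ k ∈ Icc 1 z with Squarefree k, (k.totient : ℝ)⁻¹
      = ∑ lm ∈ {k ∈ Icc 1 z | Squarefree k}.image split,
          (lm.1.totient : ℝ)⁻¹ * (lm.2.totient : ℝ)⁻¹ := by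
        rw [sum_image h_inj.injOn]
        refine sum_congr rfl fun k hk ↦ ?_
        rw [← mul_inv, ← Nat.cast_mul, ← Nat.totient_mul (h_coprime (mem_filter.1 hk).2), h_mul]
    _ ≤ _ := sum_le_sum_of_subset_of_nonneg h_image fun _ _ _ ↦ by positivity

lemma totient_mul_log_le_two_mul_sum_coprime (z : ℕ) {q : ℕ} (hq : 0 < q) :
    q.totient * Real.log z ≤
      2 * (q * ∑ k ∈ Icc 1 z with Squarefree k ∧ k.Coprime q, (k.totient : ℝ)⁻¹) := by
  have h_totient : (0 : ℝ) < q.totient := Nat.cast_pos.2 (Nat.totient_pos.2 hq)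
  have h := (log_le_two_mul_sum_squarefree_inv_totient z).trans
    (mul_le_mul_of_nonneg_left (sum_squarefree_inv_totient_le_mul_sum_coprime z hq.ne') zero_le_two)
  calc q.totient * Real.log z ≤ q.totient * _ := mul_le_mul_of_nonneg_left h h_totient.le
    _ = 2 * (q * ∑ k ∈ Icc 1 z with Squarefree k ∧ k.Coprime q, (k.totient : ℝ)⁻¹) := by
        field_simp

end Totient

section BrunTitchmarsh

open Finset BoundingSieve

lemma abs_card_Ioc_modEq_sub_le (x : ℕ) {q : ℕ} (hq : 0 < q) (a : ℕ) :
    |(#{n ∈ Ioc 0 x | n ≡ a [MOD q]} : ℝ) - x / q| ≤ 1 := by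
  set α : ℚ := (x - a) / q with hα
  set β : ℚ := ((0 : ℕ) - a) / q with hβ
  have hβα : β ≤ α := by
    rw [hα, hβ]
    gcongr
    positivity
  have h_card : (#{n ∈ Ioc 0 x | n ≡ a [MOD q]} : ℤ) = ⌊α⌋ - ⌊β⌋ :=
    (Nat.Ioc_filter_modEq_card 0 x hq a).trans
      (max_eq_left (sub_nonneg.2 (Int.floor_le_floor hβα)))
  have h_rat : |(#{n ∈ Ioc 0 x | n ≡ a [MOD q]} : ℚ) - x / q| ≤ 1 := by
    have h_sub : (#{n ∈ Ioc 0 x | n ≡ a [MOD q]} : ℚ) - x / q = Int.fract β - Int.fract α := by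
      rw [← Int.cast_natCast, h_card, Int.fract, Int.fract, hα, hβ]
      push_cast
      ring
    rw [h_sub, abs_le]
    constructor <;>
      linarith [Int.fract_nonneg α, Int.fract_lt_one α, Int.fract_nonneg β, Int.fract_lt_one β]
  have h_real := (Rat.cast_le (K := ℝ)).2 h_rat
  push_cast at h_real
  exact h_real

lemma abs_card_Ioc_modEq_dvd_sub_le (x : ℕ) {q m : ℕ} (hq : 0 < q) (hm : 0 < m)
    (hmq : m.Coprime q) (a : ℕ) :
    |(#{n ∈ Ioc 0 x | n ≡ a [MOD q] ∧ m ∣ n} : ℝ) - x / (m * q)| ≤ 1 := by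
  obtain ⟨v, hv_zero, hv_a⟩ := Nat.chineseRemainder hmq 0 a
  have h_filter : {n ∈ Ioc 0 x | n ≡ a [MOD q] ∧ m ∣ n} = {n ∈ Ioc 0 x | n ≡ v [MOD m * q]} := by
    refine filter_congr fun n _ ↦ ?_
    rw [← Nat.modEq_and_modEq_iff_modEq_mul hmq, ← Nat.modEq_zero_iff_dvd, and_comm]
    exact and_congr ⟨fun h ↦ h.trans hv_zero.symm, fun h ↦ h.trans hv_zero⟩
      ⟨fun h ↦ h.trans hv_a.symm, fun h ↦ h.trans hv_a⟩
  rw [h_filter, ← Nat.cast_mul]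
  exact abs_card_Ioc_modEq_sub_le x (Nat.mul_pos hm hq) v

/-- The sieve of the positive integers `n ≤ x` with `n ≡ a [MOD q]` by the primes up to `z` that do
not divide `q`; the density of the multiples of `d` is modelled by `1 / d`. -/
noncomputable def progressionSieve (x q a z : ℕ) : BoundingSieve where
  support := {n ∈ Ioc 0 x | n ≡ a [MOD q]}
  prodPrimes := ∏ p ∈ Nat.primesLE z with ¬p ∣ q, p
  prodPrimes_squarefree :=
    (squarefree_primorial z).squarefree_of_dvd (prod_dvd_prod_of_subset _ _ _ (filter_subset _ _))
  weights := fun _ ↦ 1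
  weights_nonneg := fun _ ↦ zero_le_one
  totalMass := x / q
  nu := ⟨fun n ↦ (n : ℝ)⁻¹, by simp⟩
  nu_mult := ⟨by simp, fun _ ↦ by simp [mul_comm]⟩
  nu_pos_of_prime := fun p hp _ ↦ inv_pos.2 (Nat.cast_pos.2 hp.pos)
  nu_lt_one_of_prime := fun p hp _ ↦ inv_lt_one_of_one_lt₀ (Nat.one_lt_cast.2 hp.one_lt)

variable {x q a z : ℕ}

lemma progressionSieve_nu (d : ℕ) : (progressionSieve x q a z).nu d = (d : ℝ)⁻¹ := rfl

lemma progressionSieve_prodPrimes :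
    (progressionSieve x q a z).prodPrimes = ∏ p ∈ Nat.primesLE z with ¬p ∣ q, p := rfl

lemma coprime_prodPrimes_progressionSieve : (progressionSieve x q a z).prodPrimes.Coprime q :=
  Nat.Coprime.prod_left fun _ hp ↦
    (Nat.Prime.coprime_iff_not_dvd (Nat.prime_of_mem_primesLE (mem_filter.1 hp).1)).2
      (mem_filter.1 hp).2

lemma divisors_prodPrimes_progressionSieve_filter_le :
    {d ∈ (progressionSieve x q a z).prodPrimes.divisors | d ≤ z} =
      {d ∈ Icc 1 z | Squarefree d ∧ d.Coprime q} := by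
  ext d
  simp only [mem_filter, Nat.mem_divisors, mem_Icc]
  constructor
  · rintro ⟨⟨hd, -⟩, hdz⟩
    have hd_sq := squarefree_of_dvd_prodPrimes hd
    exact ⟨⟨Nat.pos_of_ne_zero hd_sq.ne_zero, hdz⟩, hd_sq,
      coprime_prodPrimes_progressionSieve.coprime_dvd_left hd⟩
  · rintro ⟨⟨hd₁, hdz⟩, hd_sq, hdq⟩
    refine ⟨⟨?_, prodPrimes_ne_zero⟩, hdz⟩
    rw [← Nat.prod_primeFactors_of_squarefree hd_sq, progressionSieve_prodPrimes]
    refine prod_dvd_prod_of_subset _ _ _ fun p hp ↦ ?_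
    have hp_prime := Nat.prime_of_mem_primeFactors hp
    have hpd := Nat.dvd_of_mem_primeFactors hp
    exact mem_filter.2 ⟨Nat.mem_primesLE.2 ⟨(Nat.le_of_dvd hd₁ hpd).trans hdz, hp_prime⟩,
      (Nat.Prime.coprime_iff_not_dvd hp_prime).1 (hdq.coprime_dvd_left hpd)⟩

lemma selbergMass_progressionSieve :
    selbergMass (progressionSieve x q a z) z =
      ∑ k ∈ Icc 1 z with Squarefree k ∧ k.Coprime q, (k.totient : ℝ)⁻¹ := by
  rw [selbergMass, divisors_prodPrimes_progressionSieve_filter_le]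
  refine sum_congr rfl fun k _ ↦ ?_
  simp only [selbergTerms_apply, progressionSieve_nu, totient_eq_mul_prod_one_sub_inv k, mul_inv,
    prod_inv_distrib]

lemma abs_rem_progressionSieve_le (hq : 0 < q) {d : ℕ}
    (hd : d ∣ (progressionSieve x q a z).prodPrimes) :
    |(progressionSieve x q a z).rem d| ≤ 1 := by
  have h_rem : (progressionSieve x q a z).rem d =
      #{n ∈ Ioc 0 x | n ≡ a [MOD q] ∧ d ∣ n} - x / (d * q) := by
    rw [rem, multSum, ← sum_filter, progressionSieve_nu]
    simp only [progressionSieve, filter_filter, sum_const, nsmul_eq_mul, mul_one]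
    rw [div_mul_eq_div_div_swap, ← div_eq_inv_mul]
  rw [h_rem]
  exact abs_card_Ioc_modEq_dvd_sub_le x hq (Nat.pos_of_dvd_of_pos hd prodPrimes_ne_zero.bot_lt)
    (coprime_prodPrimes_progressionSieve.coprime_dvd_left hd) a

lemma card_primesLE_modEq_le_add_siftedSum :
    (#{p ∈ Nat.primesLE x | p ≡ a [MOD q]} : ℝ) ≤
      z + (progressionSieve x q a z).siftedSum := by
  have h_subset : {p ∈ Nat.primesLE x | p ≡ a [MOD q]} ⊆ Ioc 0 z ∪
      {n ∈ (progressionSieve x q a z).support |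
        (progressionSieve x q a z).prodPrimes.Coprime n} := by
    intro p hp
    rw [mem_filter, Nat.mem_primesLE] at hp
    obtain ⟨⟨hpx, hp_prime⟩, hpa⟩ := hp
    rw [mem_union]
    rcases le_or_gt p z with hpz | hzp
    · exact Or.inl (mem_Ioc.2 ⟨hp_prime.pos, hpz⟩)
    · refine Or.inr (mem_filter.2 ⟨mem_filter.2 ⟨mem_Ioc.2 ⟨hp_prime.pos, hpx⟩, hpa⟩, ?_⟩)
      rw [progressionSieve_prodPrimes]
      refine Nat.Coprime.prod_left fun r hr ↦ ?_
      obtain ⟨hrz, hr_prime⟩ := Nat.mem_primesLE.1 (mem_filter.1 hr).1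
      exact (Nat.coprime_primes hr_prime hp_prime).2 (hrz.trans_lt hzp).ne
  have h_card := (card_le_card h_subset).trans (card_union_le _ _)
  rw [Nat.card_Ioc, Nat.sub_zero] at h_card
  rw [siftedSum, ← sum_filter]
  simp only [progressionSieve, sum_const, nsmul_eq_mul, mul_one] at h_card ⊢
  exact_mod_cast h_card

lemma card_primesLE_modEq_le (hq : 0 < q) (hz : 1 ≤ z) :
    (#{p ∈ Nat.primesLE x | p ≡ a [MOD q]} : ℝ) ≤
      z + (x / (q * ∑ k ∈ Icc 1 z with Squarefree k ∧ k.Coprime q, (k.totient : ℝ)⁻¹) +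
        (z : ℝ) ^ 4) := by
  refine card_primesLE_modEq_le_add_siftedSum.trans (add_le_add_right
    ((siftedSum_le_div_selbergMass hz fun _ ↦ abs_rem_progressionSieve_le hq).trans
      (add_le_add ?_ ?_)) _)
  · rw [selbergMass_progressionSieve, ← div_div]
    rfl
  · rw [divisors_prodPrimes_progressionSieve_filter_le]
    have h_sum : ∑ d ∈ Icc 1 z with Squarefree d ∧ d.Coprime q,
        ((progressionSieve x q a z).nu d)⁻¹ ≤ (z : ℝ) ^ 2 := by
      calc _ ≤ ∑ d ∈ Icc 1 z, ((progressionSieve x q a z).nu d)⁻¹ :=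
            sum_le_sum_of_subset_of_nonneg (filter_subset _ _) fun d _ _ ↦ by
              rw [progressionSieve_nu]
              positivity
          _ ≤ ∑ _d ∈ Icc 1 z, (z : ℝ) := sum_le_sum fun d hd ↦ by
            rw [progressionSieve_nu, inv_inv]
            exact Nat.cast_le.2 (mem_Icc.1 hd).2
          _ = (z : ℝ) ^ 2 := by simp [sq]
    calc _ ≤ ((z : ℝ) ^ 2) ^ 2 := by
          gcongr
          exact sum_nonneg fun d _ ↦ by rw [progressionSieve_nu]; positivity
      _ = (z : ℝ) ^ 4 := by ring

theorem brun_titchmarsh (x : ℕ) (hq : 0 < q) (a : ℕ) :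
    (#{p ∈ Nat.primesLE x | p ≡ a [MOD q]} : ℝ) ≤
      16 * x / (q.totient * Real.log x) + 18 * √x := by
  rcases le_or_gt x 1 with hx | hx
  · have h_empty : Nat.primesLE x = ∅ :=
      eq_empty_of_forall_notMem fun p hp ↦
        ((Nat.one_lt_of_mem_primesLE hp).trans_le (Nat.le_of_mem_primesLE hp)).not_ge hx
    rw [h_empty, filter_empty, card_empty, Nat.cast_zero]
    have := Real.log_natCast_nonneg x
    positivity
  have hx' : (1 : ℝ) < x := mod_cast hx
  set w : ℝ := (x : ℝ) ^ (1 / 8 : ℝ) with hw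
  have hw₁ : 1 ≤ w := Real.one_le_rpow hx'.le (by norm_num)
  have hw_pow : w ^ 4 = √x := by
    rw [hw, ← Real.rpow_natCast, ← Real.rpow_mul (by positivity), Real.sqrt_eq_rpow]
    norm_num
  set z := ⌈w⌉₊
  have hwz : w ≤ z := Nat.le_ceil w
  have hz : (z : ℝ) ≤ 2 * w := by linarith [Nat.ceil_lt_add_one (zero_le_one.trans hw₁)]
  have h_log : 0 < Real.log x := Real.log_pos hx'
  set J := ∑ k ∈ Icc 1 z with Squarefree k ∧ k.Coprime q, (k.totient : ℝ)⁻¹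
  have hJ : q.totient * Real.log x / 16 ≤ q * J := by
    have h_logw : Real.log w = Real.log x / 8 := by
      rw [hw, Real.log_rpow (by positivity)]
      ring
    calc q.totient * Real.log x / 16 = q.totient * Real.log w / 2 := by rw [h_logw]; ring
      _ ≤ q.totient * Real.log z / 2 := by gcongr
      _ ≤ q * J := by linarith [totient_mul_log_le_two_mul_sum_coprime z hq]
  calc (#{p ∈ Nat.primesLE x | p ≡ a [MOD q]} : ℝ)
      ≤ z + (x / (q * J) + (z : ℝ) ^ 4) :=
        card_primesLE_modEq_le hq (Nat.one_le_ceil_iff.2 (by linarith))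
    _ ≤ 2 * w ^ 4 + (x / (q.totient * Real.log x / 16) + (2 * w) ^ 4) := by
        gcongr
        linarith [le_self_pow₀ hw₁ four_ne_zero]
    _ = 16 * x / (q.totient * Real.log x) + 18 * √x := by
        rw [← hw_pow]
        field_simp
        ring

end BrunTitchmarsh

section TruncatedRatio

open Finset

/-- The exponent of the Euler factor `1 - r⁻¹` in `(φ(n - ℓ) / (n - ℓ)) / (φ(n + ℓ) / (n + ℓ))`.
Divisibility of `n - ℓ` is written as a congruence, so that the exponent depends only on `n`
modulo `r` even when `n < ℓ`. -/
def shiftExponent (ℓ r n : ℕ) : ℤ :=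
  (if n ≡ ℓ [MOD r] then 1 else 0) - (if r ∣ n + ℓ then 1 else 0)

/-- The part of `(φ(n - ℓ) / (n - ℓ)) / (φ(n + ℓ) / (n + ℓ))` contributed by the primes in `S`. -/
noncomputable def totientRatio (ℓ : ℕ) (S : Finset ℕ) (n : ℕ) : ℝ :=
  ∏ r ∈ S, (1 - (r : ℝ)⁻¹) ^ shiftExponent ℓ r n

lemma shiftExponent_congr (ℓ : ℕ) {r m n : ℕ} (h : m ≡ n [MOD r]) :
    shiftExponent ℓ r m = shiftExponent ℓ r n := by
  have h_sub : m ≡ ℓ [MOD r] ↔ n ≡ ℓ [MOD r] := ⟨h.symm.trans, h.trans⟩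
  simp only [shiftExponent, h_sub, (h.add_right ℓ).dvd_iff dvd_rfl]

lemma totientRatio_congr (ℓ : ℕ) {S : Finset ℕ} {m n : ℕ} (h : ∀ r ∈ S, m ≡ n [MOD r]) :
    totientRatio ℓ S m = totientRatio ℓ S n :=
  prod_congr rfl fun r hr ↦ by rw [shiftExponent_congr ℓ (h r hr)]

lemma one_sub_inv_pos_of_prime {r : ℕ} (hr : r.Prime) : 0 < 1 - (r : ℝ)⁻¹ :=
  sub_pos.2 (inv_lt_one_of_one_lt₀ (Nat.one_lt_cast.2 hr.one_lt))

lemma totientRatio_pos (ℓ : ℕ) {S : Finset ℕ} (hS : ∀ r ∈ S, r.Prime) (n : ℕ) :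
    0 < totientRatio ℓ S n :=
  prod_pos fun r hr ↦ zpow_pos (one_sub_inv_pos_of_prime (hS r hr)) _

lemma finite_range_totientRatio (ℓ : ℕ) {S : Finset ℕ} (hS : ∀ r ∈ S, r.Prime) :
    (Set.range (totientRatio ℓ S)).Finite := by
  have h_pos : 0 < ∏ r ∈ S, r := prod_pos fun r hr ↦ (hS r hr).pos
  refine ((range (∏ r ∈ S, r)).finite_toSet.image (totientRatio ℓ S)).subset ?_
  rintro _ ⟨n, rfl⟩
  refine ⟨n % ∏ r ∈ S, r, mem_coe.2 (mem_range.2 (Nat.mod_lt _ h_pos)), ?_⟩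
  exact totientRatio_congr ℓ fun r hr ↦ (Nat.mod_modEq n _).of_dvd (dvd_prod_of_mem _ hr)

lemma padicValRat_one_sub_inv {r s : ℕ} [hr : Fact r.Prime] (hs : 1 < s) (hsr : s ≤ r) :
    padicValRat r (1 - (s : ℚ)⁻¹) = if s = r then -1 else 0 := by
  have hs₀ : (s : ℚ) ≠ 0 := by positivity
  have hs₁ : ((s - 1 : ℕ) : ℚ) ≠ 0 := Nat.cast_ne_zero.2 (by lia)
  have h_frac : 1 - (s : ℚ)⁻¹ = (s - 1 : ℕ) / s := by
    rw [Nat.cast_sub hs.le, Nat.cast_one, sub_div, div_self hs₀, one_div]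
  rw [h_frac, padicValRat.div hs₁ hs₀, padicValRat.of_nat, padicValRat.of_nat,
    padicValNat.eq_zero_of_not_dvd (Nat.not_dvd_of_pos_of_lt (by lia) (by lia))]
  split_ifs with h
  · rw [h, padicValNat_self, Nat.cast_zero, Nat.cast_one, zero_sub]
  · rw [padicValNat.eq_zero_of_not_dvd (Nat.not_dvd_of_pos_of_lt (by lia) (by lia)), sub_self]

lemma one_sub_inv_ne_zero {s : ℕ} (hs : 1 < s) : 1 - (s : ℚ)⁻¹ ≠ 0 :=
  (sub_pos.2 (inv_lt_one_of_one_lt₀ (Nat.one_lt_cast.2 hs))).ne'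

lemma padicValRat_prod_one_sub_inv_zpow {r : ℕ} [Fact r.Prime] {S : Finset ℕ}
    (hS : ∀ s ∈ S, 1 < s ∧ s < r) (e : ℕ → ℤ) :
    padicValRat r (∏ s ∈ S, (1 - (s : ℚ)⁻¹) ^ e s) = 0 := by
  induction S using Finset.induction_on with
  | empty => simp
  | insert t S ht ih =>
    rw [forall_mem_insert] at hS
    rw [prod_insert ht, padicValRat.mul (zpow_ne_zero _ (one_sub_inv_ne_zero hS.1.1))
        (prod_ne_zero_iff.2 fun s hs ↦ zpow_ne_zero _ (one_sub_inv_ne_zero (hS.2 s hs).1)),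
      ih hS.2, padicValRat.zpow, padicValRat_one_sub_inv hS.1.1 hS.1.2.le, if_neg hS.1.2.ne,
      mul_zero, add_zero]

-- The largest prime of `S` occurs in the denominator of its own factor and in no other factor.
lemma eq_zero_of_prod_one_sub_inv_zpow_eq_one {S : Finset ℕ} (hS : ∀ s ∈ S, s.Prime) {e : ℕ → ℤ}
    (h : ∏ s ∈ S, (1 - (s : ℚ)⁻¹) ^ e s = 1) : ∀ s ∈ S, e s = 0 := by
  induction S using Finset.induction_on_max with
  | empty => simp
  | insert r S hr ih =>
    rw [forall_mem_insert] at hS ⊢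
    have : Fact r.Prime := ⟨hS.1⟩
    rw [prod_insert fun hrS ↦ (hr r hrS).false] at h
    have hr_zero : e r = 0 := by
      have h_val := congrArg (padicValRat r) h
      rw [padicValRat.mul (zpow_ne_zero _ (one_sub_inv_ne_zero hS.1.one_lt))
          (right_ne_zero_of_mul_eq_one h),
        padicValRat_prod_one_sub_inv_zpow (fun s hs ↦ ⟨(hS.2 s hs).one_lt, hr s hs⟩),
        padicValRat.zpow, padicValRat_one_sub_inv hS.1.one_lt le_rfl, if_pos rfl,
        padicValRat.one] at h_val
      lia
    rw [hr_zero, zpow_zero, one_mul] at h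
    exact ⟨hr_zero, ih hS.2 h⟩

lemma shiftExponent_eq_of_totientRatio_eq {ℓ : ℕ} {S : Finset ℕ} (hS : ∀ r ∈ S, r.Prime) {m n : ℕ}
    (h : totientRatio ℓ S m = totientRatio ℓ S n) :
    ∀ r ∈ S, shiftExponent ℓ r m = shiftExponent ℓ r n := by
  have h_rat : ∏ r ∈ S, (1 - (r : ℚ)⁻¹) ^ (shiftExponent ℓ r m - shiftExponent ℓ r n) = 1 := by
    apply Rat.cast_injective (α := ℝ)
    push_cast
    calc _ = totientRatio ℓ S m / totientRatio ℓ S n := by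
          rw [totientRatio, totientRatio, ← prod_div_distrib]
          exact prod_congr rfl fun r hr ↦ zpow_sub₀ (one_sub_inv_pos_of_prime (hS r hr)).ne' _ _
      _ = 1 := by rw [h, div_self (totientRatio_pos ℓ hS n).ne']
  exact fun r hr ↦ sub_eq_zero.1 (eq_zero_of_prod_one_sub_inv_zpow_eq_one hS h_rat r hr)

lemma eventually_eq_of_pow_mul_le {T : Set ℝ} (hT : T.Finite) (k : ℕ) :
    ∀ᶠ c in 𝓝 (1 : ℝ), ∀ a ∈ T, ∀ b ∈ T, c ^ k * a ≤ b → c ^ k * b ≤ a → a = b := by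
  have h_lim (a : ℝ) : Tendsto (fun c ↦ c ^ k * a) (𝓝 1) (𝓝 a) := by
    simpa using ((continuous_pow k).mul_const a).tendsto (1 : ℝ)
  rw [eventually_all_finite hT]
  intro a _
  rw [eventually_all_finite hT]
  intro b _
  rcases lt_trichotomy a b with hab | rfl | hba
  · filter_upwards [(h_lim b).eventually_const_lt hab] with c hc _ hc' using absurd hc' hc.not_ge
  · exact .of_forall fun _ _ _ ↦ rfl
  · filter_upwards [(h_lim a).eventually_const_lt hba] with c hc hc' using absurd hc' hc.not_ge

lemma exists_shiftExponent_ne {ℓ r : ℕ} (hℓ : 0 < ℓ) (hr : 2 * ℓ < r) (n : ℕ) :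
    ∃ b, b ≠ 0 ∧ b < r ∧ shiftExponent ℓ r b ≠ shiftExponent ℓ r n := by
  have h_one : shiftExponent ℓ r ℓ = 1 := by
    rw [shiftExponent, if_pos (Nat.ModEq.refl ℓ),
      if_neg (Nat.not_dvd_of_pos_of_lt (by lia) (by lia)), sub_zero]
  have h_neg_one : shiftExponent ℓ r (r - ℓ) = -1 := by
    have h_ne : ¬r - ℓ ≡ ℓ [MOD r] := fun h ↦ by
      have := Nat.ModEq.eq_of_lt_of_lt h (by lia) (by lia)
      lia
    rw [shiftExponent, if_neg h_ne, Nat.sub_add_cancel (by lia), if_pos dvd_rfl, zero_sub]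
  by_cases hn : shiftExponent ℓ r n = 1
  · exact ⟨r - ℓ, by lia, by lia, by lia⟩
  · exact ⟨ℓ, by lia, by lia, by lia⟩

lemma card_le_prod_sub_two {R F : Finset ℕ} {b : ℕ → ℕ} (hb : ∀ r ∈ R, b r ≠ 0 ∧ b r < r)
    (hF : ∀ n ∈ F, ∀ r ∈ R, n % r ≠ 0 ∧ n % r ≠ b r)
    (h_inj : ∀ m ∈ F, ∀ n ∈ F, (∀ r ∈ R, m ≡ n [MOD r]) → m = n) :
    #F ≤ ∏ r ∈ R, (r - 2) := by
  calc #F ≤ #(R.pi fun r ↦ ((range r).erase 0).erase (b r)) := by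
        refine card_le_card_of_injOn (fun n r _ ↦ n % r) (fun n hn ↦ ?_) fun m hm n hn h ↦ ?_
        · refine mem_coe.2 (mem_pi.2 fun r hr ↦ ?_)
          simp only [mem_erase, mem_range]
          exact ⟨(hF n hn r hr).2, (hF n hn r hr).1, Nat.mod_lt n ((hb r hr).2.pos)⟩
        · exact h_inj m hm n hn fun r hr ↦ congrFun (congrFun h r) hr
    _ = ∏ r ∈ R, (r - 2) := by
        rw [card_pi]
        refine prod_congr rfl fun r hr ↦ ?_
        rw [card_erase_of_mem (mem_erase.2 ⟨(hb r hr).1, mem_range.2 (hb r hr).2⟩),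
          card_erase_of_mem (mem_range.2 (hb r hr).2.pos), card_range, Nat.sub_sub]

lemma modEq_prod_of_forall_modEq {R : Finset ℕ} (hR : ∀ r ∈ R, r.Prime) {m n : ℕ}
    (h : ∀ r ∈ R, m ≡ n [MOD r]) : m ≡ n [MOD ∏ r ∈ R, r] := by
  rw [Nat.modEq_iff_dvd, Nat.cast_prod]
  refine prod_dvd_of_coprime (fun p hp q hq hpq ↦ ?_) fun r hr ↦ (h r hr).dvd
  exact Nat.isCoprime_iff_coprime.2 ((Nat.coprime_primes (hR p hp) (hR q hq)).2 hpq)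

lemma card_image_mod_le_totient {B : Finset ℕ} {N : ℕ} (hN : 0 < N)
    (hB : ∀ n ∈ B, n.Coprime N) : #(B.image (· % N)) ≤ N.totient := by
  rw [Nat.totient_eq_card_coprime]
  refine card_le_card (image_subset_iff.2 fun n hn ↦ mem_filter.2 ⟨?_, ?_⟩)
  · exact mem_range.2 (Nat.mod_lt n hN)
  · exact Nat.coprime_comm.1 ((Nat.mod_modEq n N).gcd_eq.trans (hB n hn))

-- Modulo `N`, the common exponent at `r ∈ R` excludes a residue modulo `r` besides `0`.
lemma card_le_prod_sub_two_mul_totient {ℓ N : ℕ} {B R : Finset ℕ} (hℓ : 0 < ℓ) (hN : 0 < N)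
    (hR : ∀ r ∈ R, r.Prime ∧ 2 * ℓ < r) (hNR : N.Coprime (∏ r ∈ R, r))
    (hB : ∀ n ∈ B, n < N * ∏ r ∈ R, r ∧ n.Coprime (N * ∏ r ∈ R, r))
    (h_exp : ∀ m ∈ B, ∀ n ∈ B, m ≡ n [MOD N] →
      ∀ r ∈ R, shiftExponent ℓ r m = shiftExponent ℓ r n) :
    #B ≤ (∏ r ∈ R, (r - 2)) * N.totient := by
  refine (card_le_mul_card_image (f := (· % N)) B (∏ r ∈ R, (r - 2)) fun t ht ↦ ?_).trans
    (Nat.mul_le_mul_left _ (card_image_mod_le_totient hN fun n hn ↦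
      (hB n hn).2.coprime_dvd_right (Nat.dvd_mul_right _ _)))
  obtain ⟨n₀, hn₀, hn₀t⟩ := mem_image.1 ht
  choose! b hb_zero hb_lt hb_ne using fun r hr ↦ exists_shiftExponent_ne hℓ (hR r hr).2 n₀
  refine card_le_prod_sub_two (b := b) (fun r hr ↦ ⟨hb_zero r hr, hb_lt r hr⟩)
    (fun n hn r hr ↦ ⟨fun h ↦ ?_, fun h ↦ ?_⟩) fun m hm n hn h ↦ ?_
  · obtain ⟨hnB, -⟩ := mem_filter.1 hn
    exact (hR r hr).1.one_lt.ne' (Nat.eq_one_of_dvd_coprimes (hB n hnB).2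
      (Nat.dvd_of_mod_eq_zero h) ((dvd_prod_of_mem _ hr).mul_left N))
  · obtain ⟨hnB, hnt⟩ := mem_filter.1 hn
    apply hb_ne r hr
    rw [← h_exp n hnB n₀ hn₀ (hnt.trans hn₀t.symm) r hr, ← h]
    exact shiftExponent_congr ℓ (Nat.mod_modEq n r)
  · obtain ⟨hmB, hmt⟩ := mem_filter.1 hm
    obtain ⟨hnB, hnt⟩ := mem_filter.1 hn
    have h_modEq : m ≡ n [MOD N * ∏ r ∈ R, r] :=
      (Nat.modEq_and_modEq_iff_modEq_mul hNR).1
        ⟨hmt.trans hnt.symm, modEq_prod_of_forall_modEq (fun r hr ↦ (hR r hr).1) h⟩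
    exact h_modEq.eq_of_lt_of_lt (hB m hmB).1 (hB n hnB).1

/-- The reduced residues modulo the primorial of `y` whose truncated ratio is close to `1`; as
`c → 1` the window `[c, c⁻²]` shrinks to the point `1`. -/
noncomputable def nearOneResidues (ℓ y : ℕ) (c : ℝ) : Finset ℕ :=
  {a ∈ range (primorial y) | a.Coprime (primorial y) ∧
    c ≤ totientRatio ℓ (Nat.primesLE y) a ∧ c ^ 2 * totientRatio ℓ (Nat.primesLE y) a ≤ 1}

lemma prod_primesLE_sdiff_mul_prod {y : ℕ} {R : Finset ℕ} (hRy : R ⊆ Nat.primesLE y) :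
    (∏ r ∈ Nat.primesLE y \ R, r) * ∏ r ∈ R, r = primorial y := by
  rw [primorial_eq_prod_primesLE, prod_sdiff hRy]

lemma coprime_prod_primesLE_sdiff {y : ℕ} {R : Finset ℕ} (hRy : R ⊆ Nat.primesLE y) :
    (∏ r ∈ Nat.primesLE y \ R, r).Coprime (∏ r ∈ R, r) :=
  Nat.coprime_of_squarefree_mul (prod_primesLE_sdiff_mul_prod hRy ▸ squarefree_primorial y)

lemma card_nearOneResidues_le {ℓ y : ℕ} {c : ℝ} {R : Finset ℕ} (hℓ : 0 < ℓ)
    (hR : ∀ r ∈ R, r.Prime ∧ 2 * ℓ < r) (hRy : R ⊆ Nat.primesLE y) (hc : 0 < c)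
    (h_gap : ∀ m n, c ^ 3 * totientRatio ℓ R m ≤ totientRatio ℓ R n →
      c ^ 3 * totientRatio ℓ R n ≤ totientRatio ℓ R m → totientRatio ℓ R m = totientRatio ℓ R n) :
    #(nearOneResidues ℓ y c) ≤
      (∏ r ∈ R, (r - 2)) * (∏ r ∈ Nat.primesLE y \ R, r).totient := by
  set Q := Nat.primesLE y \ R
  have hQ : ∀ r ∈ Q, r.Prime := fun r hr ↦ Nat.prime_of_mem_primesLE (mem_sdiff.1 hr).1
  have h_split (n : ℕ) :
      totientRatio ℓ (Nat.primesLE y) n = totientRatio ℓ Q n * totientRatio ℓ R n :=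
    (prod_sdiff hRy).symm
  have h_close {m n : ℕ} (hm : m ∈ nearOneResidues ℓ y c) (hn : n ∈ nearOneResidues ℓ y c)
      (h : m ≡ n [MOD ∏ r ∈ Q, r]) : c ^ 3 * totientRatio ℓ R m ≤ totientRatio ℓ R n := by
    have hQ_eq : totientRatio ℓ Q m = totientRatio ℓ Q n :=
      totientRatio_congr ℓ fun r hr ↦ h.of_dvd (dvd_prod_of_mem _ hr)
    obtain ⟨-, -, -, hm_le⟩ := mem_filter.1 hm
    obtain ⟨-, -, hn_ge, -⟩ := mem_filter.1 hn
    rw [h_split] at hm_le hn_ge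
    refine le_of_mul_le_mul_left ?_ (totientRatio_pos ℓ hQ n)
    calc totientRatio ℓ Q n * (c ^ 3 * totientRatio ℓ R m)
        = c * (c ^ 2 * (totientRatio ℓ Q m * totientRatio ℓ R m)) := by rw [hQ_eq]; ring
      _ ≤ c := mul_le_of_le_one_right hc.le hm_le
      _ ≤ totientRatio ℓ Q n * totientRatio ℓ R n := hn_ge
  refine card_le_prod_sub_two_mul_totient hℓ (prod_pos fun r hr ↦ (hQ r hr).pos) hR
    (coprime_prod_primesLE_sdiff hRy) (fun n hn ↦ ?_) fun m hm n hn h ↦ ?_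
  · rw [prod_primesLE_sdiff_mul_prod hRy]
    obtain ⟨hn_lt, hn_coprime, -⟩ := mem_filter.1 hn
    exact ⟨mem_range.1 hn_lt, hn_coprime⟩
  · exact shiftExponent_eq_of_totientRatio_eq (fun r hr ↦ (hR r hr).1)
      (h_gap m n (h_close hm hn h) (h_close hn hm h.symm))

lemma exists_prime_finset_lt_sum_inv (k : ℕ) (M : ℝ) :
    ∃ R : Finset ℕ, (∀ r ∈ R, r.Prime ∧ k < r) ∧ M < ∑ r ∈ R, (r : ℝ)⁻¹ := by
  have h_not_summable : ¬Summable ({p : ℕ | p.Prime ∧ k < p}.indicator fun p ↦ (p : ℝ)⁻¹) := by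
    refine fun h ↦ not_summable_one_div_on_primes ((summable_congr_cofinite ?_).1 h)
    rw [Nat.cofinite_eq_atTop]
    filter_upwards [eventually_gt_atTop k] with p hp
    simp [Set.indicator_apply, hp]
  by_contra! h
  refine h_not_summable (summable_of_sum_le (c := M)
    (Set.indicator_nonneg fun p _ ↦ by positivity) fun R ↦ ?_)
  rw [sum_indicator_eq_sum_filter]
  exact h _ fun r hr ↦ (mem_filter.1 hr).2

lemma cast_sub_two_le_exp_neg_inv_mul {r : ℕ} (hr : 2 ≤ r) :
    ((r - 2 : ℕ) : ℝ) ≤ Real.exp (-(r : ℝ)⁻¹) * (r - 1 : ℕ) := by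
  have hr₀ : (0 : ℝ) < r := by positivity
  calc ((r - 2 : ℕ) : ℝ) ≤ (-(r : ℝ)⁻¹ + 1) * (r - 1 : ℕ) := by
        rw [Nat.cast_sub hr, Nat.cast_sub (by lia)]
        field_simp
        push_cast
        linarith
    _ ≤ Real.exp (-(r : ℝ)⁻¹) * (r - 1 : ℕ) := by
        gcongr
        exact Real.add_one_le_exp _

lemma exists_prime_finset_prod_sub_two_le (k : ℕ) {η : ℝ} (hη : 0 < η) :
    ∃ R : Finset ℕ, (∀ r ∈ R, r.Prime ∧ k < r) ∧
      ((∏ r ∈ R, (r - 2) : ℕ) : ℝ) ≤ η * (∏ r ∈ R, (r - 1) : ℕ) := by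
  obtain ⟨R, hR, hR_sum⟩ := exists_prime_finset_lt_sum_inv k (-Real.log η)
  refine ⟨R, hR, ?_⟩
  push_cast
  calc ∏ r ∈ R, ((r - 2 : ℕ) : ℝ) ≤ ∏ r ∈ R, (Real.exp (-(r : ℝ)⁻¹) * (r - 1 : ℕ)) :=
        prod_le_prod (fun r _ ↦ Nat.cast_nonneg _) fun r hr ↦
          cast_sub_two_le_exp_neg_inv_mul (hR r hr).1.two_le
    _ = Real.exp (-∑ r ∈ R, (r : ℝ)⁻¹) * ∏ r ∈ R, ((r - 1 : ℕ) : ℝ) := by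
        rw [prod_mul_distrib, ← Real.exp_sum, sum_neg_distrib]
    _ ≤ η * ∏ r ∈ R, ((r - 1 : ℕ) : ℝ) := by
        gcongr
        rw [← Real.le_log_iff_exp_le hη]
        linarith

lemma exists_eventually_card_nearOneResidues_le {ℓ : ℕ} (hℓ : 0 < ℓ) {η : ℝ} (hη : 0 < η) :
    ∃ c : ℝ, 0 < c ∧ c < 1 ∧
      ∀ᶠ y in atTop, (#(nearOneResidues ℓ y c) : ℝ) ≤ η * (primorial y).totient := by
  obtain ⟨R, hR, hR_le⟩ := exists_prime_finset_prod_sub_two_le (2 * ℓ) hη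
  have hR_prime : ∀ r ∈ R, r.Prime := fun r hr ↦ (hR r hr).1
  have h_gap := (eventually_eq_of_pow_mul_le (finite_range_totientRatio ℓ hR_prime) 3).filter_mono
    (nhdsWithin_le_nhds (s := Set.Iio 1))
  obtain ⟨c, h_gap, hc⟩ := (h_gap.and (Ioo_mem_nhdsLT zero_lt_one)).exists
  refine ⟨c, hc.1, hc.2, ?_⟩
  filter_upwards [eventually_ge_atTop (R.sup id)] with y hy
  have hRy : R ⊆ Nat.primesLE y := fun r hr ↦
    Nat.mem_primesLE.2 ⟨(le_sup (f := id) hr).trans hy, hR_prime r hr⟩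
  have h_card := card_nearOneResidues_le hℓ hR hRy hc.1
    fun m n ↦ h_gap _ (Set.mem_range_self m) _ (Set.mem_range_self n)
  calc (#(nearOneResidues ℓ y c) : ℝ)
      ≤ (∏ r ∈ R, (r - 2) : ℕ) * (∏ r ∈ Nat.primesLE y \ R, r).totient := mod_cast h_card
    _ ≤ η * (∏ r ∈ R, (r - 1) : ℕ) * (∏ r ∈ Nat.primesLE y \ R, r).totient := by gcongr
    _ = η * (primorial y).totient := by
        rw [← prod_primesLE_sdiff_mul_prod hRy,
          Nat.totient_mul (coprime_prod_primesLE_sdiff hRy), totient_prod_of_prime hR_prime]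
        push_cast
        ring

end TruncatedRatio

section SignAgreement

open Finset

/-- The sum of the reciprocals of the prime factors of `n` exceeding `y`; it measures how far
`φ(n) / n` is from the contribution of the primes up to `y`. -/
noncomputable def largePrimeSum (y n : ℕ) : ℝ :=
  ∑ r ∈ n.primeFactors with y < r, (r : ℝ)⁻¹

/-- The contribution to `φ(n) / n` of the primes up to `y`. -/
noncomputable def smoothTotientRatio (y n : ℕ) : ℝ :=
  ∏ r ∈ Nat.primesLE y with r ∣ n, (1 - (r : ℝ)⁻¹)

lemma largePrimeSum_nonneg (y n : ℕ) : 0 ≤ largePrimeSum y n :=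
  sum_nonneg fun _ _ ↦ by positivity

lemma smoothTotientRatio_pos (y n : ℕ) : 0 < smoothTotientRatio y n :=
  prod_pos fun _ hr ↦ one_sub_inv_pos_of_prime (Nat.prime_of_mem_primesLE (mem_filter.1 hr).1)

lemma one_sub_sum_le_prod_one_sub {ι : Type*} {s : Finset ι} {f : ι → ℝ}
    (hf : ∀ i ∈ s, 0 ≤ f i ∧ f i ≤ 1) : 1 - ∑ i ∈ s, f i ≤ ∏ i ∈ s, (1 - f i) := by
  induction s using Finset.cons_induction with
  | empty => simp
  | cons a s ha ih =>
    rw [forall_mem_cons] at hf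
    have h_sum : 0 ≤ ∑ i ∈ s, f i := sum_nonneg fun i hi ↦ (hf.2 i hi).1
    rw [sum_cons, prod_cons]
    calc 1 - (f a + ∑ i ∈ s, f i) ≤ (1 - f a) * (1 - ∑ i ∈ s, f i) := by
          linarith [mul_nonneg hf.1.1 h_sum]
      _ ≤ (1 - f a) * ∏ i ∈ s, (1 - f i) :=
          mul_le_mul_of_nonneg_left (ih hf.2) (sub_nonneg.2 hf.1.2)

lemma totient_div_eq_smoothTotientRatio_mul (y : ℕ) {n : ℕ} (hn : n ≠ 0) :
    (n.totient : ℝ) / n =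
      smoothTotientRatio y n * ∏ r ∈ n.primeFactors with y < r, (1 - (r : ℝ)⁻¹) := by
  have h_filter : {r ∈ n.primeFactors | ¬y < r} = {r ∈ Nat.primesLE y | r ∣ n} := by
    ext r
    simp only [mem_filter, Nat.mem_primeFactors, Nat.mem_primesLE, not_lt]
    tauto
  rw [totient_eq_mul_prod_one_sub_inv, mul_div_cancel_left₀ _ (Nat.cast_ne_zero.2 hn),
    ← prod_filter_not_mul_prod_filter _ (fun r ↦ y < r), h_filter, smoothTotientRatio]

lemma totient_div_le_smoothTotientRatio (y : ℕ) {n : ℕ} (hn : n ≠ 0) :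
    (n.totient : ℝ) / n ≤ smoothTotientRatio y n := by
  rw [totient_div_eq_smoothTotientRatio_mul y hn]
  refine mul_le_of_le_one_right (smoothTotientRatio_pos y n).le (prod_le_one (fun r hr ↦ ?_) ?_)
  · exact (one_sub_inv_pos_of_prime (Nat.prime_of_mem_primeFactors (mem_filter.1 hr).1)).le
  · exact fun r _ ↦ sub_le_self 1 (by positivity)

lemma one_sub_largePrimeSum_mul_le_totient_div (y : ℕ) {n : ℕ} (hn : n ≠ 0) :
    (1 - largePrimeSum y n) * smoothTotientRatio y n ≤ n.totient / n := by
  rw [totient_div_eq_smoothTotientRatio_mul y hn, mul_comm]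
  refine mul_le_mul_of_nonneg_left (one_sub_sum_le_prod_one_sub fun r hr ↦ ⟨by positivity, ?_⟩)
    (smoothTotientRatio_pos y n).le
  exact sub_nonneg.1
    (one_sub_inv_pos_of_prime (Nat.prime_of_mem_primeFactors (mem_filter.1 hr).1)).le

lemma totientRatio_primesLE_eq_div {ℓ n : ℕ} (y : ℕ) (hn : ℓ ≤ n) :
    totientRatio ℓ (Nat.primesLE y) n =
      smoothTotientRatio y (n - ℓ) / smoothTotientRatio y (n + ℓ) := by
  rw [totientRatio, smoothTotientRatio, smoothTotientRatio, prod_filter, prod_filter,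
    ← prod_div_distrib]
  refine prod_congr rfl fun r hr ↦ ?_
  have h_ne := (one_sub_inv_pos_of_prime (Nat.prime_of_mem_primesLE hr)).ne'
  have h_sub : n ≡ ℓ [MOD r] ↔ r ∣ n - ℓ := Nat.ModEq.comm.trans (Nat.modEq_iff_dvd' hn)
  rw [shiftExponent, zpow_sub₀ h_ne]
  simp only [h_sub]
  split_ifs <;> simp

/-- The integer `φ(p - ℓ) - φ(p + ℓ)` and the rational `φ(p - ℓ) / (p - ℓ) - φ(p + ℓ) / (p + ℓ)`
have the same sign, the latter after clearing denominators. -/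
def TotientSignsAgree (ℓ p : ℕ) : Prop :=
  ℓ < p ∧ Real.sign ((Nat.totient (p - ℓ) : ℝ) - (Nat.totient (p + ℓ) : ℝ)) =
    Real.sign (((p + ℓ : ℕ) : ℝ) * (Nat.totient (p - ℓ) : ℝ) -
      ((p - ℓ : ℕ) : ℝ) * (Nat.totient (p + ℓ) : ℝ))

lemma sign_sub_eq_sign_mul_sub_mul {a b u v : ℝ} (ha : 0 < a) (hab : a ≤ b) (hv : 0 ≤ v)
    (h : v < u ∨ b * u < a * v) : Real.sign (u - v) = Real.sign (b * u - a * v) := by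
  rcases h with hvu | h_mul
  · have : a * v < b * u := mul_lt_mul_of_le_of_lt_of_pos_of_nonneg hab hvu ha (hv.trans hvu.le)
    rw [Real.sign_of_pos (sub_pos.2 hvu), Real.sign_of_pos (sub_pos.2 this)]
  · have : u < v := by
      by_contra! hvu
      exact h_mul.not_ge (mul_le_mul hab hvu hv (ha.le.trans hab))
    rw [Real.sign_of_neg (sub_neg.2 this), Real.sign_of_neg (sub_neg.2 h_mul)]

lemma totientRatio_mem_window_of_not_agree {ℓ y p : ℕ} {c : ℝ} (hp : ℓ < p) (hc : 0 < c)
    (h_not : ¬TotientSignsAgree ℓ p) (h_sub : largePrimeSum y (p - ℓ) ≤ 1 - c)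
    (h_add : largePrimeSum y (p + ℓ) ≤ 1 - c) (hcp : c * (p + ℓ : ℕ) ≤ (p - ℓ : ℕ)) :
    c ≤ totientRatio ℓ (Nat.primesLE y) p ∧ c ^ 2 * totientRatio ℓ (Nat.primesLE y) p ≤ 1 := by
  have ha : (0 : ℝ) < (p - ℓ : ℕ) := Nat.cast_pos.2 (by lia)
  have hb : (0 : ℝ) < (p + ℓ : ℕ) := Nat.cast_pos.2 (by lia)
  obtain ⟨h_totient, h_ratio⟩ : ((p - ℓ).totient : ℝ) ≤ (p + ℓ).totient ∧
      ((p - ℓ : ℕ) : ℝ) * (p + ℓ).totient ≤ (p + ℓ : ℕ) * (p - ℓ).totient := by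
    by_contra! h
    refine h_not ⟨hp, sign_sub_eq_sign_mul_sub_mul ha (Nat.cast_le.2 (by lia))
      (Nat.cast_nonneg _) ?_⟩
    exact (lt_or_ge _ _).imp_right h
  have hf := smoothTotientRatio_pos y (p - ℓ)
  have hg := smoothTotientRatio_pos y (p + ℓ)
  have hu := one_sub_largePrimeSum_mul_le_totient_div y (n := p - ℓ) (by lia)
  have hv := one_sub_largePrimeSum_mul_le_totient_div y (n := p + ℓ) (by lia)
  rw [totientRatio_primesLE_eq_div y hp.le, ← mul_div_assoc, div_le_one hg, le_div_iff₀ hg]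
  set f := smoothTotientRatio y (p - ℓ)
  set g := smoothTotientRatio y (p + ℓ)
  constructor
  · calc c * g ≤ (1 - largePrimeSum y (p + ℓ)) * g := by gcongr; linarith
      _ ≤ (p + ℓ).totient / (p + ℓ : ℕ) := hv
      _ ≤ (p - ℓ).totient / (p - ℓ : ℕ) := by
          rw [div_le_div_iff₀ hb ha]
          linarith
      _ ≤ f := totient_div_le_smoothTotientRatio y (by lia)
  · calc c ^ 2 * f = c * (c * f) := by ring
      _ ≤ c * ((1 - largePrimeSum y (p - ℓ)) * f) := by gcongr; linarith
      _ ≤ c * ((p - ℓ).totient / (p - ℓ : ℕ)) := by gcongr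
      _ ≤ (p + ℓ).totient / (p + ℓ : ℕ) := by
          rw [← mul_div_assoc, div_le_div_iff₀ ha hb]
          calc c * (p - ℓ).totient * (p + ℓ : ℕ) = (p - ℓ).totient * (c * (p + ℓ : ℕ)) := by ring
            _ ≤ (p + ℓ).totient * (p - ℓ : ℕ) := by gcongr
      _ ≤ g := totient_div_le_smoothTotientRatio y (by lia)

lemma mod_primorial_mem_nearOneResidues {ℓ y p : ℕ} {c : ℝ} (hp : p.Prime) (hyp : y < p)
    (h_window : c ≤ totientRatio ℓ (Nat.primesLE y) p ∧
      c ^ 2 * totientRatio ℓ (Nat.primesLE y) p ≤ 1) :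
    p % primorial y ∈ nearOneResidues ℓ y c := by
  have h_congr : totientRatio ℓ (Nat.primesLE y) (p % primorial y) =
      totientRatio ℓ (Nat.primesLE y) p :=
    totientRatio_congr ℓ fun r hr ↦ (Nat.mod_modEq p _).of_dvd
      (primorial_eq_prod_primesLE y ▸ dvd_prod_of_mem _ hr)
  have h_coprime : p.Coprime (primorial y) :=
    (Nat.Prime.coprime_iff_not_dvd hp).2 fun h ↦ (hp.dvd_primorial_iff.1 h).not_gt hyp
  rw [nearOneResidues, mem_filter, mem_range, h_congr]
  exact ⟨Nat.mod_lt p (primorial_pos y), (Nat.mod_modEq p _).gcd_eq.trans h_coprime, h_window⟩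

end SignAgreement

section LargePrimes

open Finset

lemma eventually_div_log_le_two_mul_primeCounting :
    ∀ᶠ x : ℕ in atTop, (x : ℝ) / Real.log x ≤ 2 * Nat.primeCounting x := by
  have h_log : ∀ᶠ x : ℕ in atTop, Real.log (x + 1) ≤ 1 / 20 * ((x : ℝ) + 1) := by
    have h := (tendsto_atTop_add_const_right atTop (1 : ℝ)
      (tendsto_natCast_atTop_atTop (R := ℝ))).eventually
        (Real.isLittleO_log_id_atTop.bound (show (0 : ℝ) < 1 / 20 by norm_num))
    filter_upwards [h] with x hx
    rw [id, Real.norm_of_nonneg (by positivity : (0 : ℝ) ≤ x + 1)] at hx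
    exact (le_abs_self _).trans hx
  filter_upwards [h_log, eventually_ge_atTop 1] with x hx hx₁
  have hx₁ : (1 : ℝ) ≤ x := mod_cast hx₁
  have h_num : (x : ℝ) / 2 ≤ x * Real.log 2 - Real.log (x + 1) := by
    nlinarith [Real.log_two_gt_d9]
  calc (x : ℝ) / Real.log x = 2 * (x / 2 / Real.log x) := by ring
    _ ≤ 2 * ((x * Real.log 2 - Real.log (x + 1)) / Real.log x) := by
        gcongr
    _ ≤ 2 * Nat.primeCounting x := by gcongr; exact Chebyshev.pi_ge x

lemma rpow_isLittleO_primeCounting {s : ℝ} (hs : s < 1) :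
    (fun x : ℕ ↦ (x : ℝ) ^ s) =o[atTop] fun x ↦ (Nat.primeCounting x : ℝ) := by
  have h_log : (fun x : ℕ ↦ Real.log x) =o[atTop] fun x ↦ (x : ℝ) ^ (1 - s) :=
    (isLittleO_log_rpow_atTop (sub_pos.2 hs)).comp_tendsto tendsto_natCast_atTop_atTop
  have h_div : (fun x : ℕ ↦ (x : ℝ) ^ s) =o[atTop] fun x : ℕ ↦ (x : ℝ) / Real.log x := by
    refine ((Asymptotics.isBigO_refl (fun x : ℕ ↦ (x : ℝ) ^ s / Real.log x) atTop).mul_isLittleO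
      h_log).congr' ?_ ?_
    all_goals filter_upwards [eventually_gt_atTop 1] with x hx
    · exact div_mul_cancel₀ _ (Real.log_pos (mod_cast hx)).ne'
    · rw [div_mul_eq_mul_div, ← Real.rpow_add (by positivity), add_sub_cancel, Real.rpow_one]
  refine h_div.trans_isBigO (Asymptotics.IsBigO.of_bound 2 ?_)
  filter_upwards [eventually_div_log_le_two_mul_primeCounting, eventually_ge_atTop 1] with x hx hx₁
  rwa [Real.norm_of_nonneg (div_nonneg x.cast_nonneg (Real.log_nonneg (mod_cast hx₁))),
    Real.norm_of_nonneg (Nat.cast_nonneg _)]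

lemma sum_prime_card_modEq_mul_inv_le (x L : ℕ) {y : ℕ} (hy : y ≠ 0) (a : ℕ → ℕ) :
    ∑ r ∈ Ioc y L with r.Prime, (#{p ∈ Nat.primesLE x | p ≡ a r [MOD r]} : ℝ) * (r : ℝ)⁻¹ ≤
      32 * x / (y * Real.log x) + 18 * L * √x := by
  have h_term (r : ℕ) (hr : r.Prime) :
      (#{p ∈ Nat.primesLE x | p ≡ a r [MOD r]} : ℝ) * (r : ℝ)⁻¹ ≤
        32 * x / Real.log x * ((r : ℝ) ^ 2)⁻¹ + 18 * √x := by
    have hr₂ : (2 : ℝ) ≤ r := mod_cast hr.two_le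
    have h_inv : (r : ℝ)⁻¹ ≤ 1 := inv_le_one_of_one_le₀ (by linarith)
    have h_totient : (r : ℝ) / 2 ≤ r.totient := by
      rw [Nat.totient_prime hr, Nat.cast_sub hr.one_le, Nat.cast_one]
      linarith
    calc (#{p ∈ Nat.primesLE x | p ≡ a r [MOD r]} : ℝ) * (r : ℝ)⁻¹
        ≤ (16 * x / Real.log x * (r.totient : ℝ)⁻¹ + 18 * √x) * (r : ℝ)⁻¹ := by
          gcongr
          exact (brun_titchmarsh x hr.pos (a r)).trans_eq (by ring)
      _ ≤ (16 * x / Real.log x * ((r : ℝ) / 2)⁻¹ + 18 * √x) * (r : ℝ)⁻¹ := by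
          gcongr
      _ = 32 * x / Real.log x * ((r : ℝ) ^ 2)⁻¹ + 18 * √x * (r : ℝ)⁻¹ := by ring
      _ ≤ 32 * x / Real.log x * ((r : ℝ) ^ 2)⁻¹ + 18 * √x := by
          exact add_le_add le_rfl (mul_le_of_le_one_right (by positivity) h_inv)
  calc ∑ r ∈ Ioc y L with r.Prime, (#{p ∈ Nat.primesLE x | p ≡ a r [MOD r]} : ℝ) * (r : ℝ)⁻¹
      ≤ ∑ r ∈ Ioc y L with r.Prime, (32 * x / Real.log x * ((r : ℝ) ^ 2)⁻¹ + 18 * √x) :=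
        sum_le_sum fun r hr ↦ h_term r (mem_filter.1 hr).2
    _ ≤ ∑ r ∈ Ioc y L, (32 * x / Real.log x * ((r : ℝ) ^ 2)⁻¹ + 18 * √x) :=
        sum_le_sum_of_subset_of_nonneg (filter_subset _ _) fun _ _ _ ↦ by positivity
    _ = 32 * x / Real.log x * ∑ r ∈ Ioc y L, ((r : ℝ) ^ 2)⁻¹ + ↑(L - y) * (18 * √x) := by
        rw [sum_add_distrib, mul_sum, sum_const, Nat.card_Ioc, nsmul_eq_mul]
    _ ≤ 32 * x / Real.log x * (y : ℝ)⁻¹ + L * (18 * √x) := by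
        gcongr
        · exact sum_Ioc_inv_sq_le_inv hy L
        · exact Nat.sub_le L y
    _ = 32 * x / (y * Real.log x) + 18 * L * √x := by ring

lemma sum_card_modEq_mul_inv_le (x M : ℕ) {L : ℕ} (hL : L ≠ 0) (a : ℕ → ℕ) :
    ∑ r ∈ Ioc L M, (#{p ∈ Nat.primesLE x | p ≡ a r [MOD r]} : ℝ) * (r : ℝ)⁻¹ ≤ (x + M) / L := by
  have h_term (r : ℕ) (hr : r ∈ Ioc L M) :
      (#{p ∈ Nat.primesLE x | p ≡ a r [MOD r]} : ℝ) * (r : ℝ)⁻¹ ≤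
        x * ((r : ℝ) ^ 2)⁻¹ + (L : ℝ)⁻¹ := by
    have hLr := (mem_Ioc.1 hr).1
    have h_card : (#{p ∈ Nat.primesLE x | p ≡ a r [MOD r]} : ℝ) ≤
        #{n ∈ Ioc 0 x | n ≡ a r [MOD r]} := by
      gcongr
      exact fun p hp ↦ have hp := Nat.mem_primesLE.1 hp; mem_Ioc.2 ⟨hp.2.pos, hp.1⟩
    have h_count := (abs_le.1 (abs_card_Ioc_modEq_sub_le x (by lia : 0 < r) (a r))).2
    calc (#{p ∈ Nat.primesLE x | p ≡ a r [MOD r]} : ℝ) * (r : ℝ)⁻¹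
        ≤ (x / r + 1) * (r : ℝ)⁻¹ := by gcongr; linarith
      _ = x * ((r : ℝ) ^ 2)⁻¹ + (r : ℝ)⁻¹ := by ring
      _ ≤ x * ((r : ℝ) ^ 2)⁻¹ + (L : ℝ)⁻¹ := by gcongr
  calc ∑ r ∈ Ioc L M, (#{p ∈ Nat.primesLE x | p ≡ a r [MOD r]} : ℝ) * (r : ℝ)⁻¹
      ≤ ∑ r ∈ Ioc L M, (x * ((r : ℝ) ^ 2)⁻¹ + (L : ℝ)⁻¹) := sum_le_sum h_term
    _ = x * ∑ r ∈ Ioc L M, ((r : ℝ) ^ 2)⁻¹ + ↑(M - L) * (L : ℝ)⁻¹ := by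
        rw [sum_add_distrib, mul_sum, sum_const, Nat.card_Ioc, nsmul_eq_mul]
    _ ≤ x * (L : ℝ)⁻¹ + M * (L : ℝ)⁻¹ := by
        gcongr
        · exact sum_Ioc_inv_sq_le_inv hL M
        · exact Nat.sub_le M L
    _ = (x + M) / L := by ring

variable {ℓ : ℕ} {f a : ℕ → ℕ}

lemma sum_largePrimeSum_le_sum_card_modEq (x y : ℕ)
    (hf : ∀ p, ℓ < p → 0 < f p ∧ f p ≤ p + ℓ)
    (ha : ∀ p r, ℓ < p → r.Prime → r ∣ f p → p ≡ a r [MOD r]) :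
    ∑ p ∈ Nat.primesLE x with ℓ < p, largePrimeSum y (f p) ≤
      ∑ r ∈ Ioc y (x + ℓ) with r.Prime,
        (#{p ∈ Nat.primesLE x | p ≡ a r [MOD r]} : ℝ) * (r : ℝ)⁻¹ := by
  have h_primeFactors (p : ℕ) (hp : p ∈ {p ∈ Nat.primesLE x | ℓ < p}) :
      {r ∈ (f p).primeFactors | y < r} ⊆
        {r ∈ {r ∈ Ioc y (x + ℓ) | r.Prime} | p ≡ a r [MOD r]} := by
    intro r hr
    rw [mem_filter, Nat.mem_primesLE] at hp
    simp only [mem_filter, Nat.mem_primeFactors, mem_Ioc] at hr ⊢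
    obtain ⟨hf₀, hf_le⟩ := hf p hp.2
    have := Nat.le_of_dvd hf₀ hr.1.2.1
    exact ⟨⟨⟨hr.2, by lia⟩, hr.1.1⟩, ha p r hp.2 hr.1.1 hr.1.2.1⟩
  calc ∑ p ∈ Nat.primesLE x with ℓ < p, largePrimeSum y (f p)
      ≤ ∑ p ∈ Nat.primesLE x with ℓ < p,
          ∑ r ∈ Ioc y (x + ℓ) with r.Prime, if p ≡ a r [MOD r] then (r : ℝ)⁻¹ else 0 := by
        refine sum_le_sum fun p hp ↦ ?_
        rw [← sum_filter]
        exact sum_le_sum_of_subset_of_nonneg (h_primeFactors p hp) fun _ _ _ ↦ by positivity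
    _ ≤ ∑ p ∈ Nat.primesLE x,
          ∑ r ∈ Ioc y (x + ℓ) with r.Prime, if p ≡ a r [MOD r] then (r : ℝ)⁻¹ else 0 :=
        sum_le_sum_of_subset_of_nonneg (filter_subset _ _) fun _ _ _ ↦
          sum_nonneg fun _ _ ↦ by positivity
    _ = ∑ r ∈ Ioc y (x + ℓ) with r.Prime,
          (#{p ∈ Nat.primesLE x | p ≡ a r [MOD r]} : ℝ) * (r : ℝ)⁻¹ := by
        rw [sum_comm]
        exact sum_congr rfl fun r _ ↦ by rw [← sum_filter, sum_const, nsmul_eq_mul]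

lemma sum_largePrimeSum_le_of_cutoff (x : ℕ) {y L : ℕ} (hy : y ≠ 0) (hL : L ≠ 0)
    (hf : ∀ p, ℓ < p → 0 < f p ∧ f p ≤ p + ℓ)
    (ha : ∀ p r, ℓ < p → r.Prime → r ∣ f p → p ≡ a r [MOD r]) :
    ∑ p ∈ Nat.primesLE x with ℓ < p, largePrimeSum y (f p) ≤
      32 * x / (y * Real.log x) + 18 * L * √x + (x + (x + ℓ : ℕ)) / L := by
  set N : ℕ → ℝ := fun r ↦ (#{p ∈ Nat.primesLE x | p ≡ a r [MOD r]} : ℝ) * (r : ℝ)⁻¹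
  have hN (r : ℕ) : 0 ≤ N r := mul_nonneg (Nat.cast_nonneg _) (inv_nonneg.2 r.cast_nonneg)
  have h_split : {r ∈ Ioc y (x + ℓ) | r.Prime} ⊆
      {r ∈ Ioc y L | r.Prime} ∪ Ioc L (x + ℓ) := by
    intro r hr
    simp only [mem_filter, mem_union, mem_Ioc] at hr ⊢
    lia
  calc ∑ p ∈ Nat.primesLE x with ℓ < p, largePrimeSum y (f p)
      ≤ ∑ r ∈ Ioc y (x + ℓ) with r.Prime, N r := sum_largePrimeSum_le_sum_card_modEq x y hf ha
    _ ≤ ∑ r ∈ Ioc y L with r.Prime, N r + ∑ r ∈ Ioc L (x + ℓ), N r :=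
        (sum_le_sum_of_subset_of_nonneg h_split fun r _ _ ↦ hN r).trans
          (sum_union_inter.symm.ge.trans' (le_add_of_nonneg_right (sum_nonneg fun r _ ↦ hN r)))
    _ ≤ 32 * x / (y * Real.log x) + 18 * L * √x + (x + (x + ℓ : ℕ)) / L :=
        add_le_add (sum_prime_card_modEq_mul_inv_le x _ hy a) (sum_card_modEq_mul_inv_le x _ hL a)

lemma sum_largePrimeSum_le {x y : ℕ} (hx : x ≠ 0) (hy : y ≠ 0)
    (hf : ∀ p, ℓ < p → 0 < f p ∧ f p ≤ p + ℓ)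
    (ha : ∀ p r, ℓ < p → r.Prime → r ∣ f p → p ≡ a r [MOD r]) :
    ∑ p ∈ Nat.primesLE x with ℓ < p, largePrimeSum y (f p) ≤
      32 * x / (y * Real.log x) + (38 + ℓ) * (x : ℝ) ^ (3 / 4 : ℝ) := by
  have hx₁ : (1 : ℝ) ≤ x := mod_cast Nat.one_le_iff_ne_zero.2 hx
  have hw : (1 : ℝ) ≤ (x : ℝ) ^ (1 / 4 : ℝ) := Real.one_le_rpow hx₁ (by norm_num)
  set w := (x : ℝ) ^ (1 / 4 : ℝ)
  have hx_eq : (x : ℝ) = w ^ 4 := by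
    rw [← Real.rpow_mul_natCast x.cast_nonneg]
    norm_num
  have h_sqrt : √(x : ℝ) = w ^ 2 := by
    rw [Real.sqrt_eq_rpow, ← Real.rpow_mul_natCast x.cast_nonneg]
    norm_num
  have h_pow : (x : ℝ) ^ (3 / 4 : ℝ) = w ^ 3 := by
    rw [← Real.rpow_mul_natCast x.cast_nonneg]
    norm_num
  have hwL : w ≤ ⌈w⌉₊ := Nat.le_ceil w
  have hLw : (⌈w⌉₊ : ℝ) ≤ 2 * w := by linarith [Nat.ceil_lt_add_one (zero_le_one.trans hw)]
  have hL : ⌈w⌉₊ ≠ 0 := (Nat.ceil_pos.2 (by linarith)).ne'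
  calc ∑ p ∈ Nat.primesLE x with ℓ < p, largePrimeSum y (f p)
      ≤ 32 * x / (y * Real.log x) + 18 * ⌈w⌉₊ * √x + (x + (x + ℓ : ℕ)) / ⌈w⌉₊ :=
        sum_largePrimeSum_le_of_cutoff x hy hL hf ha
    _ ≤ (32 * x / (y * Real.log x) + 18 * (2 * w) * √x) + (2 * x + ℓ * x) / w := by
        gcongr ?_ + ?_ / ?_
        · gcongr
        · push_cast
          nlinarith [(ℓ.cast_nonneg : (0 : ℝ) ≤ ℓ)]
    _ = 32 * x / (y * Real.log x) + (38 + ℓ) * (x : ℝ) ^ (3 / 4 : ℝ) := by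
        rw [h_sqrt, h_pow, add_assoc]
        congr 1
        rw [hx_eq]
        field_simp
        ring

lemma eventually_card_lt_largePrimeSum_le {ε η : ℝ} (hε : 0 < ε) (hη : 0 < η)
    (hf : ∀ p, ℓ < p → 0 < f p ∧ f p ≤ p + ℓ)
    (ha : ∀ p r, ℓ < p → r.Prime → r ∣ f p → p ≡ a r [MOD r]) :
    ∀ᶠ y : ℕ in atTop, ∀ᶠ x : ℕ in atTop,
      (#{p ∈ Nat.primesLE x | ℓ < p ∧ ε < largePrimeSum y (f p)} : ℝ) ≤
        η * Nat.primeCounting x := by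
  have h_y : ∀ᶠ y : ℕ in atTop, 64 * (y : ℝ)⁻¹ ≤ ε * η / 2 := by
    have h := (tendsto_inv_atTop_nhds_zero_nat (𝕜 := ℝ)).const_mul 64
    rw [mul_zero] at h
    exact h.eventually_le_const (by positivity)
  filter_upwards [h_y, eventually_ne_atTop 0] with y hy hy₀
  have h_pow := ((rpow_isLittleO_primeCounting (s := 3 / 4) (by norm_num)).const_mul_left
    (38 + ℓ : ℝ)).bound (by positivity : 0 < ε * η / 2)
  filter_upwards [h_pow, eventually_div_log_le_two_mul_primeCounting, eventually_ne_atTop 0]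
    with x h_pow h_log hx
  rw [Real.norm_of_nonneg (by positivity), Real.norm_of_nonneg (by positivity)] at h_pow
  refine le_of_mul_le_mul_left ?_ hε
  calc ε * #{p ∈ Nat.primesLE x | ℓ < p ∧ ε < largePrimeSum y (f p)}
      = ∑ p ∈ Nat.primesLE x with ℓ < p ∧ ε < largePrimeSum y (f p), ε := by
        rw [sum_const, nsmul_eq_mul, mul_comm]
    _ ≤ ∑ p ∈ Nat.primesLE x with ℓ < p ∧ ε < largePrimeSum y (f p), largePrimeSum y (f p) :=
        sum_le_sum fun p hp ↦ (mem_filter.1 hp).2.2.le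
    _ ≤ ∑ p ∈ Nat.primesLE x with ℓ < p, largePrimeSum y (f p) :=
        sum_le_sum_of_subset_of_nonneg (monotone_filter_right _ fun _ _ h ↦ h.1) fun p _ _ ↦
          largePrimeSum_nonneg y (f p)
    _ ≤ 32 * x / (y * Real.log x) + (38 + ℓ) * (x : ℝ) ^ (3 / 4 : ℝ) :=
        sum_largePrimeSum_le hx hy₀ hf ha
    _ = 32 * (y : ℝ)⁻¹ * (x / Real.log x) + (38 + ℓ) * (x : ℝ) ^ (3 / 4 : ℝ) := by ring
    _ ≤ 32 * (y : ℝ)⁻¹ * (2 * Nat.primeCounting x) + ε * η / 2 * Nat.primeCounting x := by gcongr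
    _ = 64 * (y : ℝ)⁻¹ * Nat.primeCounting x + ε * η / 2 * Nat.primeCounting x := by ring
    _ ≤ ε * η / 2 * Nat.primeCounting x + ε * η / 2 * Nat.primeCounting x := by gcongr
    _ = ε * (η * Nat.primeCounting x) := by ring

end LargePrimes

section Density

open Finset

lemma eventually_card_mod_mem_le {M : ℕ} (hM : 0 < M) {B : Finset ℕ} {η : ℝ} (hη : 0 < η)
    (hB : (#B : ℝ) ≤ η * M.totient) :
    ∀ᶠ x : ℕ in atTop,
      (#{p ∈ Nat.primesLE x | p % M ∈ B} : ℝ) ≤ 33 * η * Nat.primeCounting x := by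
  have h_sqrt := ((rpow_isLittleO_primeCounting (s := 1 / 2) (by norm_num)).const_mul_left
    (18 * #B : ℝ)).bound hη
  filter_upwards [h_sqrt, eventually_div_log_le_two_mul_primeCounting] with x h_sqrt h_log
  rw [← Real.sqrt_eq_rpow, Real.norm_of_nonneg (by positivity),
    Real.norm_of_nonneg (by positivity)] at h_sqrt
  have h_totient : (0 : ℝ) < M.totient := Nat.cast_pos.2 (Nat.totient_pos.2 hM)
  have h_subset : {p ∈ Nat.primesLE x | p % M ∈ B} ⊆
      B.biUnion fun b ↦ {p ∈ Nat.primesLE x | p ≡ b [MOD M]} := fun p hp ↦ by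
    rw [mem_filter] at hp
    exact mem_biUnion.2 ⟨p % M, hp.2, mem_filter.2 ⟨hp.1, (Nat.mod_modEq p M).symm⟩⟩
  calc (#{p ∈ Nat.primesLE x | p % M ∈ B} : ℝ)
      ≤ ∑ b ∈ B, (#{p ∈ Nat.primesLE x | p ≡ b [MOD M]} : ℝ) :=
        mod_cast (card_le_card h_subset).trans card_biUnion_le
    _ ≤ ∑ b ∈ B, (16 * x / (M.totient * Real.log x) + 18 * √x) :=
        sum_le_sum fun b _ ↦ brun_titchmarsh x hM b
    _ = #B / M.totient * (16 * (x / Real.log x)) + 18 * #B * √x := by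
        rw [sum_const, nsmul_eq_mul]
        ring
    _ ≤ η * (16 * (2 * Nat.primeCounting x)) + η * Nat.primeCounting x := by
        gcongr
        exact (div_le_iff₀ h_totient).2 hB
    _ = 33 * η * Nat.primeCounting x := by ring

variable {ε η : ℝ}

lemma eventually_card_lt_largePrimeSum_sub_le (ℓ : ℕ) (hε : 0 < ε) (hη : 0 < η) :
    ∀ᶠ y : ℕ in atTop, ∀ᶠ x : ℕ in atTop,
      (#{p ∈ Nat.primesLE x | ℓ < p ∧ ε < largePrimeSum y (p - ℓ)} : ℝ) ≤
        η * Nat.primeCounting x := by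
  refine eventually_card_lt_largePrimeSum_le (a := fun _ ↦ ℓ) hε hη (fun p hp ↦ by lia)
    fun p r hp _ h_dvd ↦ ?_
  exact ((Nat.modEq_iff_dvd' hp.le).2 h_dvd).symm

lemma eventually_card_lt_largePrimeSum_add_le (ℓ : ℕ) (hε : 0 < ε) (hη : 0 < η) :
    ∀ᶠ y : ℕ in atTop, ∀ᶠ x : ℕ in atTop,
      (#{p ∈ Nat.primesLE x | ℓ < p ∧ ε < largePrimeSum y (p + ℓ)} : ℝ) ≤
        η * Nat.primeCounting x := by
  refine eventually_card_lt_largePrimeSum_le (a := fun r ↦ (r - 1) * ℓ) hε hη (fun p hp ↦ by lia)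
    fun p r _ hr h_dvd ↦ Nat.ModEq.add_right_cancel' ℓ ?_
  have h_neg : (r - 1) * ℓ + ℓ = r * ℓ := by
    rw [← Nat.succ_mul, Nat.succ_eq_add_one, Nat.sub_add_cancel hr.one_le]
  rw [h_neg]
  exact (Nat.modEq_zero_iff_dvd.2 h_dvd).trans (Nat.modEq_zero_iff_dvd.2 (dvd_mul_right r ℓ)).symm

lemma eventually_mul_add_le_sub (ℓ : ℕ) {c : ℝ} (hc : c < 1) :
    ∀ᶠ p : ℕ in atTop, c * (p + ℓ : ℕ) ≤ (p - ℓ : ℕ) := by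
  have h := tendsto_natCast_atTop_atTop (R := ℝ) |>.eventually_ge_atTop ((1 + c) * ℓ / (1 - c))
  filter_upwards [h, eventually_ge_atTop ℓ] with p hp hℓp
  rw [div_le_iff₀ (sub_pos.2 hc)] at hp
  push_cast [Nat.cast_sub hℓp]
  linarith

lemma eventually_totientSignsAgree_or_exceptional (ℓ y : ℕ) {c : ℝ} (hc₀ : 0 < c) (hc₁ : c < 1) :
    ∀ᶠ p : ℕ in atTop, p.Prime → TotientSignsAgree ℓ p ∨
      (ℓ < p ∧ 1 - c < largePrimeSum y (p - ℓ)) ∨ (ℓ < p ∧ 1 - c < largePrimeSum y (p + ℓ)) ∨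
        p % primorial y ∈ nearOneResidues ℓ y c := by
  filter_upwards [eventually_gt_atTop y, eventually_gt_atTop ℓ, eventually_mul_add_le_sub ℓ hc₁]
    with p hyp hℓp hcp hp
  by_contra! h
  obtain ⟨h_not, h_sub, h_add, h_mod⟩ := h
  exact h_mod <| mod_primorial_mem_nearOneResidues hp hyp <|
    totientRatio_mem_window_of_not_agree hℓp hc₀ h_not (h_sub hℓp) (h_add hℓp) hcp

open Classical in
theorem card_not_totientSignsAgree_isLittleO {ℓ : ℕ} (hℓ : 0 < ℓ) :
    (fun x : ℕ ↦ (#{p ∈ Nat.primesLE x | ¬TotientSignsAgree ℓ p} : ℝ)) =o[atTop]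
      fun x ↦ (Nat.primeCounting x : ℝ) := by
  refine Asymptotics.isLittleO_iff.2 fun η hη ↦ ?_
  have hη' : 0 < η / 36 := by positivity
  obtain ⟨c, hc₀, hc₁, h_res⟩ := exists_eventually_card_nearOneResidues_le hℓ hη'
  obtain ⟨y, h_res, h_sub, h_add⟩ := (h_res.and
    ((eventually_card_lt_largePrimeSum_sub_le ℓ (sub_pos.2 hc₁) hη').and
      (eventually_card_lt_largePrimeSum_add_le ℓ (sub_pos.2 hc₁) hη'))).exists
  obtain ⟨K, hK⟩ := eventually_atTop.1 (eventually_totientSignsAgree_or_exceptional ℓ y hc₀ hc₁)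
  have h_small : ∀ᶠ x : ℕ in atTop, (K : ℝ) ≤ η / 36 * Nat.primeCounting x :=
    ((tendsto_natCast_atTop_atTop.comp Nat.tendsto_primeCounting).const_mul_atTop
      hη').eventually_ge_atTop _
  filter_upwards [h_sub, h_add, eventually_card_mod_mem_le (primorial_pos y) hη' h_res, h_small]
    with x h_sub h_add h_mod h_small
  rw [Real.norm_of_nonneg (Nat.cast_nonneg _), Real.norm_of_nonneg (Nat.cast_nonneg _)]
  have h_cover : {p ∈ Nat.primesLE x | ¬TotientSignsAgree ℓ p} ⊆
      range K ∪ {p ∈ Nat.primesLE x | ℓ < p ∧ 1 - c < largePrimeSum y (p - ℓ)} ∪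
        {p ∈ Nat.primesLE x | ℓ < p ∧ 1 - c < largePrimeSum y (p + ℓ)} ∪
        {p ∈ Nat.primesLE x | p % primorial y ∈ nearOneResidues ℓ y c} := by
    intro p hp
    simp only [mem_filter, mem_union, mem_range] at hp ⊢
    have h_cases := hK p
    have h_prime := Nat.prime_of_mem_primesLE hp.1
    grind
  have h_card := Nat.cast_le (α := ℝ).2 <| (card_le_card h_cover).trans <|
    (card_union_le _ _).trans <| Nat.add_le_add_right ((card_union_le _ _).trans <|
      Nat.add_le_add_right (card_union_le _ _) _) _
  push_cast [card_range] at h_card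
  linarith

open Classical in
lemma card_totientSignsAgree_div_primeCounting (ℓ : ℕ) {x : ℕ} (hx : Nat.primeCounting x ≠ 0) :
    (#{p ∈ Nat.primesLE x | TotientSignsAgree ℓ p} : ℝ) / Nat.primeCounting x =
      1 - #{p ∈ Nat.primesLE x | ¬TotientSignsAgree ℓ p} / Nat.primeCounting x := by
  have h_card : (#{p ∈ Nat.primesLE x | TotientSignsAgree ℓ p} : ℝ) +
      #{p ∈ Nat.primesLE x | ¬TotientSignsAgree ℓ p} = Nat.primeCounting x := by
    rw [← Nat.primesLE_card_eq_primeCounting]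
    exact mod_cast card_filter_add_card_filter_not (s := Nat.primesLE x) (TotientSignsAgree ℓ)
  rw [eq_sub_iff_add_eq, ← add_div, h_card, div_self (Nat.cast_ne_zero.2 hx)]

end Density

theorem comparison_lemma (ℓ : ℕ) (hℓ : 0 < ℓ) :
    Tendsto (fun x : ℕ =>
      ({p : ℕ | p.Prime ∧ p ≤ x ∧ ℓ < p ∧
          Real.sign ((Nat.totient (p - ℓ) : ℝ) - (Nat.totient (p + ℓ) : ℝ)) =
            Real.sign (((p + ℓ : ℕ) : ℝ) * (Nat.totient (p - ℓ) : ℝ) -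
              ((p - ℓ : ℕ) : ℝ) * (Nat.totient (p + ℓ) : ℝ))}.ncard : ℝ) /
        (Nat.primeCounting x : ℝ)) atTop (𝓝 1) := by
  classical
  have h_lim := (card_not_totientSignsAgree_isLittleO hℓ).tendsto_div_nhds_zero.const_sub 1
  rw [sub_zero] at h_lim
  refine h_lim.congr' ?_
  filter_upwards [Nat.tendsto_primeCounting.eventually_ne_atTop 0] with x hx
  have h_set : {p ∈ Nat.primesLE x | TotientSignsAgree ℓ p} =
      {p : ℕ | p.Prime ∧ p ≤ x ∧ TotientSignsAgree ℓ p} := by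
    ext p
    simp only [Finset.coe_filter, Set.mem_ofPred_eq, Nat.mem_primesLE]
    tauto
  rw [← card_totientSignsAgree_div_primeCounting ℓ hx, ← Set.ncard_coe_finset, h_set]
  rfl
end
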